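/- arXiv:1201.0713 — 5 statements merged into one kernel-verified Lean document; each statement's English description precedes it below -/
import Mathlib

section
/- Let ζ denote the Riemann zeta function and suppose ρ = β + iγ is a zero of ζ with β > 7/8 and |ρ| > 10^{12}; let δ be the unique real number with −π < δ ≤ π such that γ·log 2 = 2πn + δ for some integer n, and suppose |δ| > π/100. Let χ be a real primitive Dirichlet character modulo D with D ≡ 0 (mod 4) and D > 10^9, and set U = |ρ|·D^{1/4}·log D. Then for every real y with U^6 ≤ y ≤ U^{12}, | Σ_{r ≤ y} ((−1)^r / r^ρ) Σ_{d|r} χ(d) | < (2/3) · y^{1/2−β} · |ρ| · D^{1/4} · log D · log(y/√D). -/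
open Complex

lemma sin_lower (D v : ℕ) (h0 : 0 < v) (h1 : v < D) :
    1 / |Real.sin (Real.pi * v / D)| ≤ (D / 2 : ℝ) * (1 / v + 1 / ((D:ℝ) - v)) := by
  have hv : (0:ℝ) < v := by exact_mod_cast h0
  have hvD : (v:ℝ) < D := by exact_mod_cast h1
  have hD : (0:ℝ) < D := by linarith
  have hs : (0:ℝ) < (D:ℝ) - v := by linarith
  have hpi := Real.pi_pos
  rcases le_total (2 * (v:ℝ)) D with h | h
  · have := Real.mul_le_sin (x := Real.pi * v / D) (by positivity)
      (by rw [div_le_div_iff₀ hD two_pos]; nlinarith)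
    have e : 2 / Real.pi * (Real.pi * v / D) = 2 * v / D := by field_simp
    rw [e] at this
    calc 1 / |Real.sin (Real.pi * v / D)| ≤ 1 / (2 * v / D) := by
          apply one_div_le_one_div_of_le (by positivity) (this.trans (le_abs_self _))
      _ = (D / 2 : ℝ) * (1 / v + 0) := by field_simp; ring
      _ ≤ _ := by gcongr; positivity
  · have := Real.mul_le_sin (x := Real.pi * (D - v) / D) (by positivity)
      (by rw [div_le_div_iff₀ hD two_pos]; nlinarith)
    have e : 2 / Real.pi * (Real.pi * (D - v) / D) = 2 * (D - v) / D := by field_simp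
    have e2 : Real.pi * (D - v) / D = Real.pi - Real.pi * v / D := by field_simp
    rw [e, e2, Real.sin_pi_sub] at this
    calc 1 / |Real.sin (Real.pi * v / D)| ≤ 1 / (2 * (D - v) / D) := by
          apply one_div_le_one_div_of_le (by positivity) (this.trans (le_abs_self _))
      _ = (D / 2 : ℝ) * (0 + 1 / ((D:ℝ) - v)) := by field_simp; ring
      _ ≤ _ := by gcongr; positivity

lemma geom_bound (z : ℂ) (hz : ‖z‖ = 1) (hz1 : z ≠ 1) (a b : ℕ) :
    ‖∑ n ∈ Finset.Ioc a b, z ^ n‖ ≤ 2 / ‖z - 1‖ := by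
  rcases le_total b a with h | h
  · rw [Finset.Ioc_eq_empty_of_le h]; simp
    positivity
  have : Finset.Ioc a b = Finset.Ico (a+1) (b+1) := by ext; simp only [Finset.mem_Ioc, Finset.mem_Ico]; omega
  rw [this, geom_sum_Ico hz1 (by omega), norm_div]
  gcongr
  refine (norm_sub_le _ _).trans ?_
  simp [hz]
  try norm_num

lemma norm_root_sub_one (x : ℝ) : ‖cexp (2 * Real.pi * I * x) - 1‖ = 2 * |Real.sin (Real.pi * x)| := by
  have h := Complex.norm_exp_I_mul_ofReal_sub_one (x := 2 * Real.pi * x)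
  rw [show (2 * Real.pi * I * x : ℂ) = I * ((2 * Real.pi * x : ℝ) : ℂ) by push_cast; ring, h]
  rw [show 2 * Real.pi * x / 2 = Real.pi * x by ring]
  simp

lemma norm_sum_char (D : ℕ) [NeZero D] (j : ZMod D) (hj : j ≠ 0) (a b : ℕ) :
    ‖∑ n ∈ Finset.Ioc a b, ZMod.stdAddChar ((n : ZMod D) * j)‖ ≤
      (D / 2 : ℝ) * (1 / (j.val : ℝ) + 1 / ((D:ℝ) - j.val)) := by
  have h0 : 0 < j.val := Nat.pos_of_ne_zero (by simpa using hj)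
  have h1 : j.val < D := ZMod.val_lt j
  have e : ∀ n : ℕ, ZMod.stdAddChar ((n : ZMod D) * j) = (ZMod.stdAddChar j) ^ n := by
    intro n
    rw [← nsmul_eq_mul, AddChar.map_nsmul_eq_pow]
  have hz : ZMod.stdAddChar j = cexp (2 * Real.pi * I * ((j.val / D : ℝ) : ℝ)) := by
    rw [ZMod.stdAddChar_apply, ZMod.toCircle_apply]
    push_cast
    congr 1; ring
  have hn : ‖(ZMod.stdAddChar j : ℂ) - 1‖ = 2 * |Real.sin (Real.pi * j.val / D)| := by
    rw [hz, norm_root_sub_one, mul_div_assoc]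
  have hne : (ZMod.stdAddChar j : ℂ) ≠ 1 := by
    intro h
    rw [h] at hn
    have hp : 0 < Real.sin (Real.pi * j.val / D) := by
      have hv : (0:ℝ) < j.val := by exact_mod_cast h0
      have hvD : (j.val:ℝ) < D := by exact_mod_cast h1
      have hD : (0:ℝ) < D := by linarith
      have := Real.pi_pos
      apply Real.sin_pos_of_pos_of_lt_pi (by positivity)
      rw [div_lt_iff₀ hD]; nlinarith
    rw [sub_self, norm_zero] at hn
    have := abs_pos.mpr hp.ne'
    linarith
  simp_rw [e]
  refine (geom_bound _ (by rw [ZMod.stdAddChar_apply]; exact Circle.norm_coe _) hne a b).trans ?_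
  rw [hn]
  refine le_trans (le_of_eq ?_) (sin_lower D j.val h0 h1)
  rw [div_mul_eq_div_div]; norm_num

lemma sum_recip (D : ℕ) (hD : 1 < D) :
    ∑ v ∈ Finset.Ico 1 D, (D / 2 : ℝ) * (1 / (v : ℝ) + 1 / ((D:ℝ) - v)) ≤ D * (1 + Real.log D) := by
  rw [← Finset.mul_sum, Finset.sum_add_distrib]
  have h1 : ∑ v ∈ Finset.Ico 1 D, 1 / ((D:ℝ) - v) = ∑ v ∈ Finset.Ico 1 D, 1 / (v:ℝ) := by
    apply Finset.sum_nbij' (fun v => D - v) (fun v => D - v)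
    · intro v hv; simp at *; omega
    · intro v hv; simp at *; omega
    · intro v hv; simp at *; omega
    · intro v hv; simp at *; omega
    · intro v hv; simp at hv; rw [Nat.cast_sub hv.2.le]
  rw [h1]
  have h2 : ∑ v ∈ Finset.Ico 1 D, 1 / (v:ℝ) ≤ 1 + Real.log D := by
    refine le_trans ?_ (harmonic_le_one_add_log D)
    rw [harmonic_eq_sum_Icc]
    push_cast
    simp_rw [one_div]
    apply Finset.sum_le_sum_of_subset_of_nonneg
    · intro v hv; simp at *; omega
    · intros; positivity
  have : (0:ℝ) ≤ D := by positivity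
  nlinarith

lemma polya (D : ℕ) (hD : 1 < D) (χ : DirichletCharacter ℂ D) (hreal : ∀ n : ℕ, (χ n).im = 0)
    (hprim : χ.IsPrimitive) (a b : ℕ) :
    ‖∑ n ∈ Finset.Ioc a b, χ n‖ ≤ Real.sqrt D * (1 + Real.log D) := by
  have : NeZero D := ⟨by omega⟩
  have : Fact (1 < D) := ⟨hD⟩
  have hinv : χ⁻¹ = χ := by
    rw [← MulChar.star_eq_inv]
    ext u
    rw [MulChar.star_apply]
    have := hreal (u : ZMod D).val
    rw [ZMod.natCast_zmod_val] at this
    exact Complex.conj_eq_iff_im.mpr this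
  set τ := gaussSum χ (ZMod.stdAddChar (N := D)) with hτ
  have key : ∀ k : ZMod D, ∑ j, χ j * ZMod.stdAddChar (k * j) = χ k * τ := by
    intro k
    have := gaussSum_mulShift_of_isPrimitive (ZMod.stdAddChar (N := D)) hprim k
    rw [hinv] at this
    rw [← this, gaussSum]
    simp [AddChar.mulShift_apply]
  have hF : ∀ k : ZMod D, ZMod.dft χ k = χ (-k) * τ := by
    intro k
    rw [hprim.fourierTransform_eq_inv_mul_gaussSum, hinv]
  have hττ : τ * τ = D * χ (-1) := by
    have h := congrFun (ZMod.dft_dft (χ : ZMod D → ℂ)) 1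
    have hF' : ZMod.dft (χ : ZMod D → ℂ) = fun k => χ k * (χ (-1) * τ) := by
      ext k; rw [hF, neg_eq_neg_one_mul, map_mul]; ring
    rw [hF', ZMod.dft_mul_const] at h
    simp only [smul_eq_mul, hF] at h
    have h1 : χ (-1) * χ (-1) = 1 := by rw [← map_mul]; simp
    linear_combination h - τ * τ * h1
  have hm1 : ‖χ (-1)‖ = 1 := by
    have h1 : χ (-1) * χ (-1) = 1 := by rw [← map_mul]; simp
    have := congrArg norm h1
    rw [norm_mul, norm_one] at this
    nlinarith [norm_nonneg (χ (-1))]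
  have hDpos : (0:ℝ) < D := by positivity
  have hτn : ‖τ‖ = Real.sqrt D := by
    have := congrArg norm hττ
    rw [norm_mul, norm_mul, hm1, mul_one, Complex.norm_natCast] at this
    rw [← this, Real.sqrt_mul_self (norm_nonneg _)]
  have hsum : (∑ n ∈ Finset.Ioc a b, χ n) * τ =
      ∑ j, χ j * ∑ n ∈ Finset.Ioc a b, ZMod.stdAddChar ((n : ZMod D) * j) := by
    rw [Finset.sum_mul]
    simp_rw [← key, Finset.mul_sum]
    rw [Finset.sum_comm]
  have hb : ‖∑ n ∈ Finset.Ioc a b, χ n‖ * Real.sqrt D ≤ D * (1 + Real.log D) := by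
    rw [← hτn, ← norm_mul, hsum]
    refine (norm_sum_le _ _).trans (le_trans ?_ (sum_recip D hD))
    rw [← Finset.sum_erase Finset.univ (a := (0 : ZMod D))]
    · refine le_trans (Finset.sum_le_sum (g := fun j : ZMod D => (D / 2 : ℝ) * (1 / (j.val : ℝ) + 1 / ((D:ℝ) - j.val))) ?_) (le_of_eq ?_)
      · intro j hj
        rw [norm_mul]
        have h1 := χ.norm_le_one j
        have h2 := norm_sum_char D j (Finset.ne_of_mem_erase hj) a b
        exact (mul_le_mul h1 h2 (norm_nonneg _) zero_le_one).trans (le_of_eq (one_mul _))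
      · apply Finset.sum_nbij' (fun j : ZMod D => j.val) (fun v : ℕ => (v : ZMod D))
        · intro j hj
          have := ZMod.val_lt j
          have : j.val ≠ 0 := by simpa using Finset.ne_of_mem_erase hj
          simp; omega
        · intro v hv
          simp at hv
          simp
          rw [ZMod.natCast_eq_zero_iff]
          exact Nat.not_dvd_of_pos_of_lt hv.1 hv.2
        · intro j hj; simp
        · intro v hv; simp at hv; exact ZMod.val_cast_of_lt hv.2
        · intro j hj; rfl
    · rw [MulChar.map_zero]; simp
  have hs : 0 < Real.sqrt D := Real.sqrt_pos.mpr hDpos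
  have := Real.mul_self_sqrt hDpos.le
  refine le_of_mul_le_mul_right (hb.trans (le_of_eq ?_)) hs
  linear_combination (-(1 + Real.log D)) * this


lemma cpow_diff_eq (s : ℂ) (hs : 0 < s.re) (a b : ℝ) (ha : 0 < a) (hab : a ≤ b) :
    (b : ℂ) ^ (-s) - (a : ℂ) ^ (-s) = -s * ∫ u in a..b, (u : ℂ) ^ (-s - 1) := by
  have hs0 : s ≠ 0 := by rintro rfl; simp at hs
  rw [integral_cpow]
  · rw [sub_add_cancel]; field_simp
  · right
    refine ⟨?_, ?_⟩
    · intro h; apply hs0; linear_combination -h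
    · rw [Set.uIcc_of_le hab]; simp; intro h; linarith

lemma cpow_diff (s : ℂ) (hs : 0 < s.re) (a b : ℝ) (ha : 0 < a) (hab : a ≤ b) :
    ‖(b : ℂ) ^ (-s) - (a : ℂ) ^ (-s)‖ ≤ ‖s‖ / s.re * (a ^ (-s.re) - b ^ (-s.re)) := by
  rw [cpow_diff_eq s hs a b ha hab, norm_mul, norm_neg, div_mul_eq_mul_div, mul_div_assoc]
  gcongr
  refine (intervalIntegral.norm_integral_le_integral_norm hab).trans (le_of_eq ?_)
  have : ∫ u in a..b, ‖(u : ℂ) ^ (-s - 1)‖ = ∫ u in a..b, u ^ (-s.re - 1) := by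
    apply intervalIntegral.integral_congr
    intro u hu
    rw [Set.uIcc_of_le hab] at hu
    simp only
    rw [Complex.norm_cpow_eq_rpow_re_of_pos (by linarith [hu.1])]
    simp
  rw [this, integral_rpow]
  · rw [sub_add_cancel]; field_simp; ring
  · right
    refine ⟨by linarith, ?_⟩
    rw [Set.uIcc_of_le hab]; simp; intro h; linarith

lemma cpow_diff2 (s : ℂ) (hs : 0 < s.re) (a b : ℝ) (ha : 0 < a) (hab : a ≤ b) :
    ‖(b : ℂ) ^ (-s) - (a : ℂ) ^ (-s)‖ ≤ ‖s‖ * (a ^ (-s.re - 1) * (b - a)) := by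
  rw [cpow_diff_eq s hs a b ha hab, norm_mul, norm_neg]
  gcongr
  rw [← abs_of_nonneg (sub_nonneg.mpr hab)]
  apply intervalIntegral.norm_integral_le_of_norm_le_const
  intro u hu
  rw [Set.uIoc_of_le hab] at hu
  rw [Complex.norm_cpow_eq_rpow_re_of_pos (by linarith [hu.1])]
  simp only [sub_re, neg_re, one_re]
  exact Real.rpow_le_rpow_of_nonpos ha hu.1.le (by linarith)

lemma abel_id (c f : ℕ → ℂ) (a b : ℕ) (hab : a ≤ b) :
    ∑ n ∈ Finset.Ioc a b, c n * f n = (∑ n ∈ Finset.Ioc a b, c n) * f (b + 1) +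
      ∑ n ∈ Finset.Ioc a b, (∑ m ∈ Finset.Ioc a n, c m) * (f n - f (n + 1)) := by
  induction b, hab using Nat.le_induction with
  | base => simp
  | succ b hab ih =>
    rw [Finset.sum_Ioc_succ_top hab, ih, Finset.sum_Ioc_succ_top hab (fun n => (∑ m ∈ Finset.Ioc a n, c m) * (f n - f (n + 1))), Finset.sum_Ioc_succ_top hab c]
    ring

lemma abel_bound (s : ℂ) (hs : 0 < s.re) (c : ℕ → ℂ) (M : ℝ) (a b : ℕ)
    (hM : ∀ n, ‖∑ m ∈ Finset.Ioc a n, c m‖ ≤ M) :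
    ‖∑ n ∈ Finset.Ioc a b, c n * (n : ℂ) ^ (-s)‖ ≤ M * (‖s‖ / s.re * ((a : ℝ) + 1) ^ (-s.re)) := by
  have hM0 : 0 ≤ M := (norm_nonneg _).trans (hM a)
  rcases le_total b a with h | hab
  · rw [Finset.Ioc_eq_empty_of_le h]; simp; positivity
  have hR : 1 ≤ ‖s‖ / s.re := by
    rw [one_le_div hs]; exact (le_abs_self _).trans (Complex.abs_re_le_norm s)
  rw [abel_id c (fun n => (n : ℂ) ^ (-s)) a b hab]
  have h1 : ∀ n ∈ Finset.Ioc a b, ‖(∑ m ∈ Finset.Ioc a n, c m) * ((n : ℂ) ^ (-s) - ((n + 1 : ℕ) : ℂ) ^ (-s))‖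
      ≤ M * (‖s‖ / s.re * ((n : ℝ) ^ (-s.re) - ((n : ℝ) + 1) ^ (-s.re))) := by
    intro n hn
    rw [norm_mul, norm_sub_rev]
    have hn0 : 0 < n := by simp at hn; omega
    have := cpow_diff s hs n (n + 1 : ℕ) (by exact_mod_cast hn0) (by push_cast; linarith)
    push_cast at this ⊢
    exact mul_le_mul (hM n) this (norm_nonneg _) hM0
  have h2 : ∑ n ∈ Finset.Ioc a b, M * (‖s‖ / s.re * ((n : ℝ) ^ (-s.re) - ((n : ℝ) + 1) ^ (-s.re)))
      = M * (‖s‖ / s.re * (((a : ℝ) + 1) ^ (-s.re) - ((b : ℝ) + 1) ^ (-s.re))) := by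
    rw [← Finset.mul_sum, ← Finset.mul_sum]
    congr 2
    clear h1
    induction b, hab using Nat.le_induction with
    | base => simp
    | succ b hab ih => rw [Finset.sum_Ioc_succ_top hab, ih]; push_cast; ring
  have h3 : ‖((b + 1 : ℕ) : ℂ) ^ (-s)‖ = ((b : ℝ) + 1) ^ (-s.re) := by
    rw [Complex.norm_natCast_cpow_of_pos (by omega)]; push_cast; simp
  calc _ ≤ M * ((b : ℝ) + 1) ^ (-s.re) + M * (‖s‖ / s.re * (((a : ℝ) + 1) ^ (-s.re) - ((b : ℝ) + 1) ^ (-s.re))) := by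
        refine (norm_add_le _ _).trans (add_le_add ?_ ?_)
        · rw [norm_mul, h3]; gcongr; exact hM b
        · rw [← h2]; exact (norm_sum_le _ _).trans (Finset.sum_le_sum h1)
    _ ≤ _ := by
        have : 0 ≤ ((b : ℝ) + 1) ^ (-s.re) := by positivity
        nlinarith [mul_nonneg hM0 (mul_nonneg (sub_nonneg.mpr hR) this)]

lemma eta_pair_re_gt (s : ℂ) (hs : 1 < s.re) :
    ∑' k : ℕ, ((2 * k + 2 : ℂ) ^ (-s) - (2 * k + 1 : ℂ) ^ (-s)) =
      (2 * 2 ^ (-s) - 1) * riemannZeta s := by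
  have hz := zeta_eq_tsum_one_div_nat_add_one_cpow hs
  have hsum : Summable (fun n : ℕ => 1 / ((n : ℂ) + 1) ^ s) := by
    have := (summable_nat_add_iff 1).mpr (Complex.summable_one_div_nat_cpow.mpr hs)
    simpa using this
  set f : ℕ → ℂ := fun n : ℕ => 1 / ((n : ℂ) + 1) ^ s with hf
  have he : Summable (fun k => f (2 * k)) := hsum.comp_injective (fun a b h => by simpa using h)
  have ho : Summable (fun k => f (2 * k + 1)) := hsum.comp_injective (fun a b h => by simpa using h)
  have hadd := tsum_even_add_odd he ho
  have e1 : ∀ k : ℕ, (2 * k + 1 : ℂ) ^ (-s) = f (2 * k) := by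
    intro k; simp [hf, cpow_neg]
  have e2 : ∀ k : ℕ, (2 * k + 2 : ℂ) ^ (-s) = f (2 * k + 1) := by
    intro k; simp only [hf, cpow_neg, one_div]; push_cast; ring_nf
  have e3 : ∀ k : ℕ, f (2 * k + 1) = 2 ^ (-s) * f k := by
    intro k
    rw [← e2]
    have := natCast_mul_natCast_cpow 2 (k + 1) (-s)
    push_cast at this
    rw [show (2 * k + 2 : ℂ) = 2 * (k + 1) by ring, this]
    simp [hf, cpow_neg]
  have e4 : ∑' k, f (2 * k + 1) = 2 ^ (-s) * riemannZeta s := by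
    rw [tsum_congr e3, tsum_mul_left, hz]
  simp_rw [e1, e2]
  rw [ho.tsum_sub he]
  rw [← hz] at hadd
  linear_combination 2 * e4 - hadd

lemma pair_bound (s : ℂ) (hs : 1 / 2 < s.re) (R : ℝ) (hR : ‖s‖ ≤ R) (k : ℕ) :
    ‖(2 * k + 2 : ℂ) ^ (-s) - (2 * k + 1 : ℂ) ^ (-s)‖ ≤ R * ((k + 1 : ℕ) : ℝ) ^ (-(3 / 2) : ℝ) := by
  have h := cpow_diff2 s (by linarith) (2 * k + 1) (2 * k + 2) (by positivity) (by linarith)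
  push_cast at h ⊢
  refine h.trans ?_
  have h1 : (2 * (k:ℝ) + 1) ^ (-s.re - 1) ≤ ((k:ℝ) + 1) ^ (-(3 / 2) : ℝ) := by
    calc (2 * (k:ℝ) + 1) ^ (-s.re - 1) ≤ ((k:ℝ) + 1) ^ (-s.re - 1) :=
          Real.rpow_le_rpow_of_nonpos (by positivity) (by linarith [(Nat.cast_nonneg k : (0:ℝ) ≤ k)]) (by linarith)
      _ ≤ _ := Real.rpow_le_rpow_of_exponent_le (by linarith [(Nat.cast_nonneg k : (0:ℝ) ≤ k)]) (by linarith)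
  have h2 : (2 * (k:ℝ) + 2) - (2 * k + 1) = 1 := by ring
  rw [h2, mul_one]
  have := (norm_nonneg s).trans hR
  gcongr

lemma summable_u (R : ℝ) : Summable (fun k : ℕ => R * ((k + 1 : ℕ) : ℝ) ^ (-(3 / 2) : ℝ)) :=
  ((summable_nat_add_iff 1).mpr (Real.summable_nat_rpow.mpr (by norm_num))).mul_left R

lemma eta_eq (ρ : ℂ) (hρ : 1 / 2 < ρ.re) (him : ρ.im ≠ 0) :
    ∑' k : ℕ, ((2 * k + 2 : ℂ) ^ (-ρ) - (2 * k + 1 : ℂ) ^ (-ρ)) =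
      (2 * 2 ^ (-ρ) - 1) * riemannZeta ρ := by
  set R := ‖ρ‖ + 3 with hR
  set U : Set ℂ := {s | 1 / 2 < s.re} ∩ {s | 0 < ρ.im * s.im} ∩ Metric.ball 0 R with hU
  have hUo : IsOpen U := by
    refine ((isOpen_lt continuous_const Complex.continuous_re).inter
      (isOpen_lt continuous_const (continuous_const.mul Complex.continuous_im))).inter Metric.isOpen_ball
  have hUc : Convex ℝ U := by
    refine ((convex_halfSpace_re_gt _).inter ?_).inter (convex_ball _ _)
    intro x hx y hy p q hp hq hpq
    simp only [Set.mem_ofPred_eq, add_im, real_smul, mul_im, ofReal_re, ofReal_im, zero_mul, add_zero] at *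
    rcases hp.eq_or_lt with h | h
    · subst h
      have : q = 1 := by linarith
      subst this; simpa using hy
    · nlinarith [mul_pos h hx, mul_nonneg hq hy.le]
  have hmem : ∀ s ∈ U, 1 / 2 < s.re ∧ s.im ≠ 0 ∧ ‖s‖ ≤ R := by
    intro s hs
    refine ⟨hs.1.1, ?_, ?_⟩
    · intro h; have := hs.1.2; simp [h] at this
    · have := hs.2; rw [mem_ball_zero_iff] at this; exact this.le
  have hρ2 : 0 < ρ.im * ρ.im := mul_self_pos.mpr him
  have hρU : ρ ∈ U := ⟨⟨hρ, hρ2⟩, by rw [mem_ball_zero_iff]; linarith⟩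
  set z : ℂ := 2 + ρ.im * I with hz
  have hzre : z.re = 2 := by simp [hz]
  have hzim : z.im = ρ.im := by simp [hz]
  have hzU : z ∈ U := by
    refine ⟨⟨?_, ?_⟩, ?_⟩
    · simp only [Set.mem_ofPred_eq, hzre]; norm_num
    · simp only [Set.mem_ofPred_eq, hzim]; exact hρ2
    · rw [mem_ball_zero_iff]
      have h1 : ‖z‖ ≤ 2 + |ρ.im| := by
        refine (norm_add_le _ _).trans ?_
        simp
      have := Complex.abs_im_le_norm ρ
      linarith
  have hF : DifferentiableOn ℂ (fun s : ℂ => ∑' k : ℕ, ((2 * k + 2 : ℂ) ^ (-s) - (2 * k + 1 : ℂ) ^ (-s))) U := by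
    apply differentiableOn_tsum_of_summable_norm (summable_u R) _ hUo
    · intro k s hs
      exact pair_bound s (hmem s hs).1 R (hmem s hs).2.2 k
    · intro k s hs
      have h1 : (2 * k + 2 : ℂ) ≠ 0 := by exact_mod_cast (by omega : 2 * k + 2 ≠ 0)
      have h2 : (2 * k + 1 : ℂ) ≠ 0 := by exact_mod_cast (by omega : 2 * k + 1 ≠ 0)
      apply DifferentiableAt.differentiableWithinAt
      exact ((differentiableAt_id.neg).const_cpow (Or.inl h1)).sub
        ((differentiableAt_id.neg).const_cpow (Or.inl h2))
  have hG : DifferentiableOn ℂ (fun s : ℂ => (2 * 2 ^ (-s) - 1) * riemannZeta s) U := by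
    intro s hs
    apply DifferentiableAt.differentiableWithinAt
    have h1 : s ≠ 1 := by rintro rfl; exact (hmem _ hs).2.1 (by simp)
    refine DifferentiableAt.mul ?_ (differentiableAt_riemannZeta h1)
    exact ((differentiableAt_const _).mul ((differentiableAt_id.neg).const_cpow (Or.inl two_ne_zero))).sub (differentiableAt_const _)
  have := AnalyticOnNhd.eqOn_of_preconnected_of_eventuallyEq (hF.analyticOnNhd hUo) (hG.analyticOnNhd hUo)
    hUc.isPreconnected hzU ?_
  · exact this hρU
  · have : {s : ℂ | 1 < s.re} ∈ nhds z :=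
      (isOpen_lt continuous_const Complex.continuous_re).mem_nhds (by simp only [Set.mem_ofPred_eq, hzre]; norm_num)
    filter_upwards [this] with s hs
    exact eta_pair_re_gt s hs

lemma pair_partial (s : ℂ) (K : ℕ) :
    ∑ k ∈ Finset.range K, ((2 * k + 2 : ℂ) ^ (-s) - (2 * k + 1 : ℂ) ^ (-s)) =
      ∑ n ∈ Finset.Ioc 0 (2 * K), (-1 : ℂ) ^ n * (n : ℂ) ^ (-s) := by
  induction K with
  | zero => simp
  | succ K ih =>
    rw [Finset.sum_range_succ, ih, show 2 * (K + 1) = 2 * K + 1 + 1 by ring,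
      Finset.sum_Ioc_succ_top (by omega), Finset.sum_Ioc_succ_top (by omega)]
    have hp2 : (-1 : ℂ) ^ (2 * K + 1) = -1 := by rw [pow_succ, pow_mul]; simp
    have hp3 : (-1 : ℂ) ^ (2 * K + 1 + 1) = 1 := by rw [pow_succ, hp2]; simp
    rw [hp2, hp3]
    push_cast
    rw [show (2 * K + 1 + 1 : ℂ) = 2 * K + 2 by ring]
    ring

lemma alt_sign_sum (a n : ℕ) : ‖∑ m ∈ Finset.Ioc a n, (-1 : ℂ) ^ m‖ ≤ 1 := by
  rcases le_total n a with h | h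
  · rw [Finset.Ioc_eq_empty_of_le h]; simp
  have : Finset.Ioc a n = Finset.Ico (a+1) (n+1) := by
    ext; simp only [Finset.mem_Ioc, Finset.mem_Ico]; omega
  rw [this, geom_sum_Ico (by norm_num) (by omega), norm_div]
  have : ‖(-1 : ℂ) - 1‖ = 2 := by norm_num
  rw [this, div_le_one two_pos]
  refine (norm_sub_le _ _).trans ?_
  simp
  try norm_num

lemma eta_tail (ρ : ℂ) (hρ : 1 / 2 < ρ.re) (him : ρ.im ≠ 0) (h0 : riemannZeta ρ = 0) (N : ℕ) :
    ‖∑ n ∈ Finset.Ioc 0 N, (-1 : ℂ) ^ n * (n : ℂ) ^ (-ρ)‖ ≤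
      ‖ρ‖ / ρ.re * ((N : ℝ) + 1) ^ (-ρ.re) := by
  have hs : Summable (fun k : ℕ => ((2 * k + 2 : ℂ) ^ (-ρ) - (2 * k + 1 : ℂ) ^ (-ρ))) :=
    Summable.of_norm_bounded (summable_u ‖ρ‖) (fun k => pair_bound ρ hρ _ le_rfl k)
  have ht := hs.hasSum.tendsto_sum_nat
  rw [eta_eq ρ hρ him, h0, mul_zero] at ht
  simp_rw [pair_partial] at ht
  have ht2 := ht.norm.add_const (‖ρ‖ / ρ.re * ((N : ℝ) + 1) ^ (-ρ.re))
  rw [norm_zero, zero_add] at ht2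
  refine ge_of_tendsto ht2 ?_
  filter_upwards [Filter.eventually_ge_atTop N] with K hK
  have h1 := abel_bound ρ (by linarith) (fun n => (-1 : ℂ) ^ n) 1 N (2 * K) (alt_sign_sum N)
  rw [one_mul] at h1
  have h2 : ∑ n ∈ Finset.Ioc 0 N, (-1 : ℂ) ^ n * (n : ℂ) ^ (-ρ) =
      ∑ n ∈ Finset.Ioc 0 (2 * K), (-1 : ℂ) ^ n * (n : ℂ) ^ (-ρ) -
      ∑ n ∈ Finset.Ioc N (2 * K), (-1 : ℂ) ^ n * (n : ℂ) ^ (-ρ) := by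
    rw [← Finset.sum_Ioc_consecutive _ (Nat.zero_le N) (by omega : N ≤ 2 * K)]; ring
  rw [h2]
  refine (norm_sub_le _ _).trans ?_
  gcongr

lemma hyperbola_id (F : ℕ → ℕ → ℂ) (Y w : ℕ) :
    ∑ r ∈ Finset.Icc 1 Y, ∑ d ∈ r.divisors, F d (r / d) =
      ∑ d ∈ Finset.Ioc 0 w, ∑ e ∈ Finset.Ioc 0 (Y / d), F d e +
      ∑ e ∈ Finset.Ioc 0 (Y / (w + 1)), ∑ d ∈ Finset.Ioc w (Y / e), F d e := by
  have h1 : ∑ r ∈ Finset.Icc 1 Y, ∑ d ∈ r.divisors, F d (r / d) =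
      ∑ d ∈ Finset.Ioc 0 (max Y w), ∑ e ∈ Finset.Ioc 0 (Y / d), F d e := by
    rw [Finset.sum_sigma', Finset.sum_sigma']
    apply Finset.sum_nbij' (fun p => (⟨p.2, p.1 / p.2⟩ : (_ : ℕ) × ℕ)) (fun p => (⟨p.1 * p.2, p.1⟩ : (_ : ℕ) × ℕ))
    · rintro ⟨r, d⟩ h
      simp only [Finset.mem_sigma, Finset.mem_Icc, Nat.mem_divisors, Finset.mem_Ioc] at h ⊢
      obtain ⟨⟨hr1, hr2⟩, hd, -⟩ := h
      have hd0 : 0 < d := Nat.pos_of_dvd_of_pos hd hr1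
      have := Nat.le_of_dvd hr1 hd
      exact ⟨⟨hd0, by omega⟩, Nat.div_pos this hd0, Nat.div_le_div_right hr2⟩
    · rintro ⟨d, e⟩ h
      simp only [Finset.mem_sigma, Finset.mem_Icc, Nat.mem_divisors, Finset.mem_Ioc] at h ⊢
      obtain ⟨⟨hd, -⟩, he, heY⟩ := h
      have hde : 0 < d * e := Nat.mul_pos hd he
      rw [Nat.le_div_iff_mul_le hd] at heY
      exact ⟨⟨hde, by rw [mul_comm]; exact heY⟩, Dvd.intro _ rfl, hde.ne'⟩
    · rintro ⟨r, d⟩ h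
      simp only [Finset.mem_sigma, Finset.mem_Icc, Nat.mem_divisors] at h
      simp [Nat.mul_div_cancel' h.2.1]
    · rintro ⟨d, e⟩ h
      simp only [Finset.mem_sigma, Finset.mem_Ioc] at h
      simp [Nat.mul_div_cancel_left e h.1.1]
    · rintro ⟨r, d⟩ h
      rfl
  rw [h1, ← Finset.sum_Ioc_consecutive _ (Nat.zero_le w) (le_max_right Y w)]
  congr 1
  apply Finset.sum_comm'
  intro d e
  simp only [Finset.mem_Ioc]
  constructor
  · rintro ⟨⟨hd, -⟩, he, heY⟩
    have hd0 : 0 < d := by omega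
    rw [Nat.le_div_iff_mul_le hd0] at heY
    refine ⟨⟨hd, ?_⟩, he, ?_⟩
    · rw [Nat.le_div_iff_mul_le he]; linarith
    · rw [Nat.le_div_iff_mul_le (by omega)]
      exact le_trans (Nat.mul_le_mul_left _ hd) heY
  · rintro ⟨⟨hd, hdY⟩, he, -⟩
    have hd0 : 0 < d := by omega
    rw [Nat.le_div_iff_mul_le he] at hdY
    refine ⟨⟨hd, ?_⟩, he, ?_⟩
    · exact le_max_of_le_left (le_trans (Nat.le_mul_of_pos_right _ he) hdY)
    · rw [Nat.le_div_iff_mul_le hd0]; linarith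

lemma sum_rpow_bound (β x : ℝ) (hβ1 : β < 1) (hx : 1 ≤ x) (E : ℕ) (hE : (E : ℝ) ≤ x) :
    ∑ e ∈ Finset.Ioc 0 E, (e : ℝ) ^ (-β) ≤ x ^ (1 - β) * (1 + Real.log x) := by
  have h1 : ∀ e ∈ Finset.Ioc 0 E, (e : ℝ) ^ (-β) ≤ x ^ (1 - β) * (e : ℝ)⁻¹ := by
    intro e he
    simp only [Finset.mem_Ioc] at he
    have he0 : (0:ℝ) < e := by exact_mod_cast he.1
    have heE : (e:ℝ) ≤ E := by exact_mod_cast he.2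
    calc (e : ℝ) ^ (-β) = (e : ℝ) ^ (1 - β) * (e : ℝ)⁻¹ := by
          rw [← Real.rpow_neg_one (e : ℝ), ← Real.rpow_add he0]; congr 1; ring
      _ ≤ _ := by
          refine mul_le_mul_of_nonneg_right ?_ (by positivity)
          exact Real.rpow_le_rpow he0.le (heE.trans hE) (by linarith)
  refine (Finset.sum_le_sum h1).trans ?_
  rw [← Finset.mul_sum]
  gcongr
  rcases Nat.eq_zero_or_pos E with h | h
  · subst h; simp; linarith [Real.log_nonneg hx]
  · have := harmonic_le_one_add_log E
    rw [harmonic_eq_sum_Icc] at this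
    push_cast at this
    have hl : Real.log E ≤ Real.log x := Real.log_le_log (by exact_mod_cast h) hE
    have e : Finset.Ioc 0 E = Finset.Icc 1 E := rfl
    rw [e]; linarith

lemma main_bound (β : ℝ) (ρ : ℂ) (hre : ρ.re = β)
    (hzero : riemannZeta ρ = 0) (hβ : 7 / 8 < β) (hβ1 : β < 1) (him : ρ.im ≠ 0)
    (D : ℕ) (χ : DirichletCharacter ℂ D)
    (hreal : ∀ n : ℕ, (χ n).im = 0) (hprim : χ.IsPrimitive)
    (hD4 : D % 4 = 0) (hD : 1 < D) (y W x : ℝ) (hW : 0 < W) (hx : 1 ≤ x) (hWx : W * x = y) :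
    ‖∑ r ∈ Finset.Icc 1 ⌊y⌋₊,
        ((-1 : ℂ) ^ r / (r : ℂ) ^ ρ) * ∑ d ∈ r.divisors, χ d‖ ≤
      ‖ρ‖ / β * y ^ (-β) * (W + Real.sqrt D * (1 + Real.log D) * x * (1 + Real.log x)) := by
  have hx0 : 0 < x := by linarith
  have hy0 : 0 < y := by rw [← hWx]; positivity
  have hβ0 : 0 < β := by linarith
  set Y := ⌊y⌋₊ with hY
  set w := ⌊W⌋₊ with hw
  set M := Real.sqrt D * (1 + Real.log D) with hM
  have hM0 : 0 ≤ M := (norm_nonneg _).trans (polya D hD χ hreal hprim 0 0)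
  have hwW : (w : ℝ) ≤ W := Nat.floor_le hW.le
  have hWw : W < w + 1 := Nat.lt_floor_add_one W
  have hYy : (Y : ℝ) ≤ y := Nat.floor_le hy0.le
  have hyY : y < Y + 1 := Nat.lt_floor_add_one y
  have hchi : ∀ d e : ℕ, χ d * (-1 : ℂ) ^ (d * e) = χ d * (-1 : ℂ) ^ e := by
    intro d e
    rcases Nat.even_or_odd d with h | h
    · have : χ d = 0 := by
        apply MulChar.map_nonunit
        rw [ZMod.isUnit_iff_coprime]
        intro hc
        have h2 : 2 ∣ Nat.gcd d D := Nat.dvd_gcd h.two_dvd (by omega)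
        rw [hc] at h2
        omega
      rw [this]; simp
    · rw [pow_mul, h.neg_one_pow]
  have hrw : ∑ r ∈ Finset.Icc 1 Y, ((-1 : ℂ) ^ r / (r : ℂ) ^ ρ) * ∑ d ∈ r.divisors, χ d =
      ∑ r ∈ Finset.Icc 1 Y, ∑ d ∈ r.divisors,
        (fun d e : ℕ => (χ d * (d : ℂ) ^ (-ρ)) * ((-1 : ℂ) ^ e * (e : ℂ) ^ (-ρ))) d (r / d) := by
    apply Finset.sum_congr rfl
    intro r hr
    rw [Finset.mul_sum]
    apply Finset.sum_congr rfl
    intro d hd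
    have hdr : d * (r / d) = r := Nat.mul_div_cancel' (Nat.dvd_of_mem_divisors hd)
    generalize r / d = e at hdr
    subst hdr
    have h1 := natCast_mul_natCast_cpow d e (-ρ)
    have h2 := hchi d e
    push_cast
    rw [div_eq_mul_inv, ← cpow_neg, h1]
    linear_combination (d : ℂ) ^ (-ρ) * (e : ℂ) ^ (-ρ) * h2
  rw [hrw, hyperbola_id (fun d e : ℕ => (χ d * (d : ℂ) ^ (-ρ)) * ((-1 : ℂ) ^ e * (e : ℂ) ^ (-ρ))) Y w]
  have hB : ‖∑ d ∈ Finset.Ioc 0 w, ∑ e ∈ Finset.Ioc 0 (Y / d),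
      (χ d * (d : ℂ) ^ (-ρ)) * ((-1 : ℂ) ^ e * (e : ℂ) ^ (-ρ))‖ ≤ ‖ρ‖ / β * y ^ (-β) * W := by
    have h1 : ∀ d ∈ Finset.Ioc 0 w, ‖∑ e ∈ Finset.Ioc 0 (Y / d),
      (χ d * (d : ℂ) ^ (-ρ)) * ((-1 : ℂ) ^ e * (e : ℂ) ^ (-ρ))‖ ≤ ‖ρ‖ / β * y ^ (-β) := by
      intro d hd
      simp only [Finset.mem_Ioc] at hd
      have hd0 : (0:ℝ) < d := by exact_mod_cast hd.1
      rw [← Finset.mul_sum, norm_mul, norm_mul, Complex.norm_natCast_cpow_of_pos hd.1]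
      have h2 := eta_tail ρ (by linarith) him hzero (Y / d)
      have h3 := χ.norm_le_one d
      rw [neg_re, hre] at *
      have h4 : y ≤ d * (((Y / d : ℕ) : ℝ) + 1) := by
        have : Y + 1 ≤ d * (Y / d + 1) := Nat.lt_mul_div_succ Y hd.1
        have : ((Y + 1 : ℕ) : ℝ) ≤ ((d * (Y / d + 1) : ℕ) : ℝ) := by exact_mod_cast this
        push_cast [-Nat.cast_div_charZero] at this
        linarith
      calc _ ≤ (1 * (d:ℝ) ^ (-β)) * (‖ρ‖ / β * (((Y / d : ℕ) : ℝ) + 1) ^ (-β)) := by gcongr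
        _ = ‖ρ‖ / β * (d * (((Y / d : ℕ) : ℝ) + 1)) ^ (-β) := by
            rw [Real.mul_rpow hd0.le (by positivity)]; ring
        _ ≤ _ := by
            gcongr ?_ * ?_
            exact Real.rpow_le_rpow_of_nonpos hy0 h4 (by linarith)
    refine (norm_sum_le _ _).trans ((Finset.sum_le_sum h1).trans ?_)
    rw [Finset.sum_const, Nat.card_Ioc, nsmul_eq_mul, Nat.sub_zero, mul_comm]
    gcongr
  have hC : ‖∑ e ∈ Finset.Ioc 0 (Y / (w + 1)), ∑ d ∈ Finset.Ioc w (Y / e),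
      (χ d * (d : ℂ) ^ (-ρ)) * ((-1 : ℂ) ^ e * (e : ℂ) ^ (-ρ))‖ ≤
      ‖ρ‖ / β * y ^ (-β) * (M * x * (1 + Real.log x)) := by
    have h1 : ∀ e ∈ Finset.Ioc 0 (Y / (w + 1)), ‖∑ d ∈ Finset.Ioc w (Y / e),
      (χ d * (d : ℂ) ^ (-ρ)) * ((-1 : ℂ) ^ e * (e : ℂ) ^ (-ρ))‖ ≤
        (M * (‖ρ‖ / β * W ^ (-β))) * (e : ℝ) ^ (-β) := by
      intro e he
      simp only [Finset.mem_Ioc] at he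
      rw [← Finset.sum_mul, norm_mul, norm_mul, Complex.norm_natCast_cpow_of_pos he.1]
      have h2 := abel_bound ρ (by linarith) (fun n => χ n) M w (Y / e)
        (fun n => polya D hD χ hreal hprim w n)
      rw [neg_re, hre] at *
      have h5 : ((w : ℝ) + 1) ^ (-β) ≤ W ^ (-β) :=
        Real.rpow_le_rpow_of_nonpos hW hWw.le (by linarith)
      have h6 : ‖(-1 : ℂ) ^ e‖ = 1 := by simp
      rw [h6, one_mul]
      gcongr
      exact h2.trans (by gcongr)
    refine (norm_sum_le _ _).trans ((Finset.sum_le_sum h1).trans ?_)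
    rw [← Finset.mul_sum]
    have hE : ((Y / (w + 1) : ℕ) : ℝ) ≤ x := by
      refine Nat.cast_div_le.trans ?_
      push_cast
      rw [div_le_iff₀ (by positivity)]
      nlinarith
    have h7 := sum_rpow_bound β x hβ1 hx _ hE
    calc _ ≤ (M * (‖ρ‖ / β * W ^ (-β))) * (x ^ (1 - β) * (1 + Real.log x)) := by gcongr
      _ = _ := by
        rw [← hWx, Real.mul_rpow hW.le hx0.le, show (1 - β) = 1 + -β by ring,
          Real.rpow_add hx0, Real.rpow_one]
        ring
  refine (norm_add_le _ _).trans ((add_le_add hB hC).trans (le_of_eq ?_))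
  ring

theorem stmt11 (β γ : ℝ) (ρ : ℂ) (hρ : ρ = β + γ * I)
    (hzero : riemannZeta ρ = 0) (hβ : 7 / 8 < β) (hρbig : 10 ^ 12 < ‖ρ‖)
    (δ : ℝ) (hδ1 : -Real.pi < δ) (hδ2 : δ ≤ Real.pi)
    (hδ3 : ∃ n : ℤ, γ * Real.log 2 = 2 * Real.pi * n + δ)
    (hδ4 : Real.pi / 100 < |δ|)
    (D : ℕ) (χ : DirichletCharacter ℂ D)
    (hreal : ∀ n : ℕ, (χ n).im = 0) (hprim : χ.IsPrimitive)
    (hD4 : D % 4 = 0) (hD : 10 ^ 9 < D)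
    (U : ℝ) (hU : U = ‖ρ‖ * (D : ℝ) ^ ((1 : ℝ) / 4) * Real.log D)
    (y : ℝ) (hy1 : U ^ (6 : ℕ) ≤ y) (hy2 : y ≤ U ^ (12 : ℕ)) :
    ‖∑ r ∈ Finset.Icc 1 ⌊y⌋₊,
        ((-1 : ℂ) ^ r / (r : ℂ) ^ ρ) * ∑ d ∈ r.divisors, χ d‖ <
      2 / 3 * y ^ (1 / 2 - β) * ‖ρ‖ * (D : ℝ) ^ ((1 : ℝ) / 4) * Real.log D *
        Real.log (y / Real.sqrt D) := by
  have hre : ρ.re = β := by rw [hρ]; simp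
  have himγ : ρ.im = γ := by rw [hρ]; simp
  have hβ1 : β < 1 := by
    by_contra h
    exact riemannZeta_ne_zero_of_one_le_re (s := ρ) (by rw [hre]; linarith) hzero
  have him : ρ.im ≠ 0 := by
    intro h
    have h1 := Complex.norm_le_abs_re_add_abs_im ρ
    rw [h, hre, abs_of_pos (by linarith : (0:ℝ) < β), abs_zero] at h1
    norm_num at hρbig
    linarith
  have hDr : (10:ℝ) ^ 9 < D := by exact_mod_cast hD
  have hD0 : (0:ℝ) < D := lt_trans (by norm_num) hDr
  have hD1 : 1 < D := lt_trans (by norm_num) hD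
  have hl10 : 2 ≤ Real.log 10 := by
    rw [Real.le_log_iff_exp_le (by norm_num)]
    have h1 := Real.exp_one_lt_d9
    have h2 : Real.exp 2 = Real.exp 1 * Real.exp 1 := by rw [← Real.exp_add]; norm_num
    rw [h2]
    nlinarith [Real.exp_pos 1]
  set l := Real.log D with hl
  have hl18 : 18 ≤ l := by
    have : Real.log ((10:ℝ) ^ 9) ≤ l := Real.log_le_log (by norm_num) hDr.le
    rw [Real.log_pow] at this
    push_cast at this
    linarith
  set q := (D : ℝ) ^ ((1 : ℝ) / 4) with hq
  have hq0 : 0 < q := by positivity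
  have hqq : q * q = Real.sqrt D := by
    rw [hq, ← Real.rpow_add hD0, Real.sqrt_eq_rpow]; norm_num
  have hq1 : 1 ≤ q := Real.one_le_rpow (by exact_mod_cast hD1.le) (by norm_num)
  set L := Real.log (y / Real.sqrt D) with hL
  have hUq : 10 ^ 12 * q ≤ U := by
    rw [hU]
    have : 0 < ‖ρ‖ * q := mul_pos (by linarith) hq0
    nlinarith
  have hU6 : (10 ^ 12 * q) ^ 6 ≤ y := le_trans (by gcongr) hy1
  have hyD : (10:ℝ) ^ 72 ≤ y / Real.sqrt D := by
    rw [← hqq, le_div_iff₀ (by positivity)]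
    refine le_trans ?_ hU6
    rw [mul_pow, ← pow_mul]
    have : q * q ≤ q ^ 6 := by rw [← pow_two]; exact pow_le_pow_right₀ hq1 (by norm_num)
    norm_num
    exact this
  have hL144 : 144 ≤ L := by
    have : Real.log ((10:ℝ) ^ 72) ≤ L := Real.log_le_log (by norm_num) hyD
    rw [Real.log_pow] at this
    push_cast at this
    linarith
  have hy0 : 0 < y := lt_of_lt_of_le (by positivity) hU6
  have hsy : 0 < Real.sqrt y := Real.sqrt_pos.mpr hy0
  have hxsq : Real.sqrt y / q = Real.sqrt (y / Real.sqrt D) := by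
    rw [Real.sqrt_div hy0.le, ← hqq, Real.sqrt_mul_self hq0.le]
  have hx : 1 ≤ Real.sqrt y / q := by
    rw [hxsq, Real.one_le_sqrt]
    exact le_trans (by norm_num) hyD
  have hlx : Real.log (Real.sqrt y / q) = L / 2 := by
    rw [hxsq, Real.log_sqrt (by positivity)]
  have hmain := main_bound β ρ hre hzero hβ hβ1 him D χ hreal hprim hD4 hD1 y (Real.sqrt y * q)
    (Real.sqrt y / q) (by positivity) hx (by field_simp; exact Real.sq_sqrt hy0.le)
  rw [hlx] at hmain
  refine lt_of_le_of_lt hmain ?_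
  have hypow : y ^ (1 / 2 - β) = Real.sqrt y * y ^ (-β) := by
    rw [Real.sqrt_eq_rpow, ← Real.rpow_add hy0]; congr 1
  have hP : 0 < ‖ρ‖ * y ^ (-β) * (Real.sqrt y * q) := by
    have : 0 < ‖ρ‖ := by linarith
    positivity
  have hβi : 1 / β ≤ 8 / 7 := by
    rw [div_le_div_iff₀ (by linarith) (by norm_num)]; linarith
  have e1 : ‖ρ‖ / β * y ^ (-β) * (Real.sqrt y * q + Real.sqrt D * (1 + l) * (Real.sqrt y / q) * (1 + L / 2))
      = (‖ρ‖ * y ^ (-β) * (Real.sqrt y * q)) * (1 / β * (1 + (1 + l) * (1 + L / 2))) := by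
    rw [← hqq]; field_simp
  have e2 : 2 / 3 * y ^ (1 / 2 - β) * ‖ρ‖ * q * l * L =
      (‖ρ‖ * y ^ (-β) * (Real.sqrt y * q)) * (2 / 3 * l * L) := by
    rw [hypow]; ring
  rw [e1, e2]
  apply mul_lt_mul_of_pos_left _ hP
  calc 1 / β * (1 + (1 + l) * (1 + L / 2)) ≤ 8 / 7 * (1 + (1 + l) * (1 + L / 2)) := by gcongr
    _ < _ := by nlinarith [mul_nonneg (sub_nonneg.mpr hl18) (sub_nonneg.mpr hL144)]
end

section
/- Let ρ = β + iγ be a complex number with 0 < β < 1 such that (2^{1−ρ} − 1)ζ(ρ) = 0. Then for every real N ≥ 1, | Σ_{l ≤ N} (−1)^l/l^ρ | ≤ (1 + |ρ|/β) · N^{−β}. -/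
open Complex

noncomputable def pairTerm (k : ℕ) (s : ℂ) : ℂ :=
  1 / ((2 * k + 2 : ℕ) : ℂ) ^ s - 1 / ((2 * k + 1 : ℕ) : ℂ) ^ s

lemma pairTerm_bound (k : ℕ) (s : ℂ) (hs : 0 < s.re) :
    ‖pairTerm k s‖ ≤ ‖s‖ * ((k + 1 : ℕ) : ℝ) ^ (-(s.re + 1)) := by
  have hs0 : -s ≠ 0 := by
    intro h
    have : s = 0 := by simpa using h
    simp [this] at hs
  have hpos : ∀ x ∈ Set.Icc ((2 * k + 1 : ℕ) : ℝ) ((2 * k + 2 : ℕ) : ℝ), ((k + 1 : ℕ) : ℝ) ≤ x := by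
    intro x hx
    refine le_trans ?_ hx.1
    exact_mod_cast (by omega : k + 1 ≤ 2 * k + 1)
  have h1 : (0 : ℝ) < ((k + 1 : ℕ) : ℝ) := by positivity
  have := Convex.norm_image_sub_le_of_norm_hasDerivWithin_le
    (f := fun x : ℝ => (x : ℂ) ^ (-s)) (f' := fun x : ℝ => -s * (x : ℂ) ^ (-s - 1))
    (s := Set.Icc ((2 * k + 1 : ℕ) : ℝ) ((2 * k + 2 : ℕ) : ℝ))
    (x := ((2 * k + 1 : ℕ) : ℝ)) (y := ((2 * k + 2 : ℕ) : ℝ))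
    (C := ‖s‖ * ((k + 1 : ℕ) : ℝ) ^ (-(s.re + 1)))
    (fun x hx => (hasDerivAt_ofReal_cpow_const (h1.trans_le (hpos x hx)).ne' hs0).hasDerivWithinAt)
    (fun x hx => by
      have hx0 := h1.trans_le (hpos x hx)
      rw [norm_mul, norm_neg, norm_cpow_eq_rpow_re_of_pos hx0]
      have : (-s - 1).re = -(s.re + 1) := by simp; ring
      rw [this]
      gcongr ‖s‖ * ?_
      exact Real.rpow_le_rpow_of_nonpos h1 (hpos x hx) (by linarith))
    (convex_Icc _ _) (by simp) (by simp)
  have e : ‖((2 * k + 2 : ℕ) : ℝ) - ((2 * k + 1 : ℕ) : ℝ)‖ = 1 := by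
    push_cast; ring_nf; simp
  rw [e, mul_one] at this
  simpa [pairTerm, cpow_neg] using this

lemma summable_aux (d : ℝ) (hd : 0 < d) :
    Summable (fun k : ℕ => ((k + 1 : ℕ) : ℝ) ^ (-(d + 1))) :=
  (summable_nat_add_iff 1).2 (Real.summable_nat_rpow.2 (by linarith))

lemma summable_pairTerm (s : ℂ) (hs : 0 < s.re) : Summable (fun k => pairTerm k s) :=
  Summable.of_norm_bounded ((summable_aux s.re hs).mul_left ‖s‖) (fun k => pairTerm_bound k s hs)

lemma differentiable_pairTerm (k : ℕ) : Differentiable ℂ (pairTerm k) := by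
  intro s
  unfold pairTerm
  have h2 : ((2 * k + 2 : ℕ) : ℂ) ≠ 0 := by exact_mod_cast (by omega : 2 * k + 2 ≠ 0)
  have h1 : ((2 * k + 1 : ℕ) : ℂ) ≠ 0 := by exact_mod_cast (by omega : 2 * k + 1 ≠ 0)
  refine DifferentiableAt.sub ?_ ?_
  · exact (differentiableAt_const _).div (differentiableAt_id.const_cpow (Or.inl h2))
      (fun h => h2 ((cpow_eq_zero_iff _ _).1 h).1)
  · exact (differentiableAt_const _).div (differentiableAt_id.const_cpow (Or.inl h1))
      (fun h => h1 ((cpow_eq_zero_iff _ _).1 h).1)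

lemma diff_F : DifferentiableOn ℂ (fun s => ∑' k, pairTerm k s) {s : ℂ | 0 < s.re} := by
  intro s hs
  have hs : 0 < s.re := hs
  let U : Set ℂ := {w | s.re / 2 < w.re} ∩ {w | ‖w‖ < ‖s‖ + 1}
  have hU : IsOpen U := (isOpen_lt continuous_const continuous_re).inter
    (isOpen_lt continuous_norm continuous_const)
  have hsU : s ∈ U := ⟨by simp only [Set.mem_ofPred_eq]; linarith, by simp⟩
  have := differentiableOn_tsum_of_summable_norm (F := pairTerm)
    (((summable_aux (s.re / 2) (by linarith)).mul_left (‖s‖ + 1)))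
    (fun i => (differentiable_pairTerm i).differentiableOn) hU (by
      intro i w hw
      have hw1 : s.re / 2 < w.re := hw.1
      have hw2 : ‖w‖ < ‖s‖ + 1 := hw.2
      refine (pairTerm_bound i w (by linarith)).trans ?_
      gcongr
      simp)
  exact (this.differentiableAt (hU.mem_nhds hsU)).differentiableWithinAt

lemma half_ne : ((1 / 2 : ℝ) : UnitAddCircle) ≠ 0 := by
  intro h
  rw [AddCircle.coe_eq_zero_iff] at h
  obtain ⟨n, hn⟩ := h
  have : (2 * n : ℝ) = 1 := by simp at hn; linarith
  have : 2 * n = 1 := by exact_mod_cast this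
  omega

lemma eta_re (s : ℂ) (hs : 1 < s.re) :
    HurwitzZeta.expZeta ((1 / 2 : ℝ) : UnitAddCircle) s = (2 ^ (1 - s) - 1) * riemannZeta s ∧
    ∑' k, pairTerm k s = HurwitzZeta.expZeta ((1 / 2 : ℝ) : UnitAddCircle) s := by
  have hT : Summable (fun n : ℕ => 1 / (n : ℂ) ^ s) := Complex.summable_one_div_nat_cpow.2 hs
  have hs0 : s ≠ 0 := Complex.ne_zero_of_one_lt_re hs
  have hE := (HurwitzZeta.hasSum_expZeta_of_one_lt_re (1 / 2) hs)
  have hexp : ∀ n : ℕ, cexp (2 * Real.pi * I * ((1 / 2 : ℝ) : ℂ) * n) = (-1) ^ n := by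
    intro n
    rw [show (2 * Real.pi * I * ((1 / 2 : ℝ) : ℂ) * n : ℂ) = n * (Real.pi * I) by push_cast; ring,
      Complex.exp_nat_mul, Complex.exp_pi_mul_I]
  simp_rw [hexp] at hE
  have he : Summable (fun k : ℕ => 1 / ((2 * k : ℕ) : ℂ) ^ s) :=
    hT.comp_injective (i := fun k : ℕ => 2 * k) (fun a b h => by simpa using h)
  have ho : Summable (fun k : ℕ => 1 / ((2 * k + 1 : ℕ) : ℂ) ^ s) :=
    hT.comp_injective (i := fun k : ℕ => 2 * k + 1) (fun a b h => by simpa using h)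
  have he2 : Summable (fun k : ℕ => 1 / ((2 * k + 2 : ℕ) : ℂ) ^ s) := by
    simpa only [mul_add, mul_one] using
      (summable_nat_add_iff (f := fun k : ℕ => 1 / ((2 * k : ℕ) : ℂ) ^ s) 1).2 he
  have hz : riemannZeta s = ∑' k : ℕ, 1 / ((2 * k : ℕ) : ℂ) ^ s + ∑' k : ℕ, 1 / ((2 * k + 1 : ℕ) : ℂ) ^ s := by
    rw [zeta_eq_tsum_one_div_nat_cpow hs]
    exact (tsum_even_add_odd (f := fun n : ℕ => 1 / (n : ℂ) ^ s) he ho).symm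
  have hz2 : ∑' k : ℕ, 1 / ((2 * k : ℕ) : ℂ) ^ s = 2 ^ (-s) * riemannZeta s := by
    rw [zeta_eq_tsum_one_div_nat_cpow hs, ← tsum_mul_left]
    congr 1; ext k
    push_cast
    rw [show (2 * k : ℂ) = ((2 : ℕ) : ℂ) * (k : ℂ) by simp, Complex.natCast_mul_natCast_cpow, cpow_neg]
    push_cast
    rw [one_div, one_div, mul_inv]
  have hEE : HurwitzZeta.expZeta ((1 / 2 : ℝ) : UnitAddCircle) s =
      ∑' k : ℕ, 1 / ((2 * k : ℕ) : ℂ) ^ s - ∑' k : ℕ, 1 / ((2 * k + 1 : ℕ) : ℂ) ^ s := by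
    have h := HasSum.even_add_odd (f := fun n : ℕ => (-1 : ℂ) ^ n / (n : ℂ) ^ s)
      (m := ∑' k : ℕ, 1 / ((2 * k : ℕ) : ℂ) ^ s) (m' := - ∑' k : ℕ, 1 / ((2 * k + 1 : ℕ) : ℂ) ^ s)
      (by simpa [pow_mul] using he.hasSum)
      (by simpa [pow_mul, pow_add, neg_div] using ho.hasSum.neg)
    rw [hE.unique h, sub_eq_add_neg]
  have hF : ∑' k, pairTerm k s =
      ∑' k : ℕ, 1 / ((2 * k : ℕ) : ℂ) ^ s - ∑' k : ℕ, 1 / ((2 * k + 1 : ℕ) : ℂ) ^ s := by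
    rw [he.tsum_eq_zero_add]
    simp only [pairTerm]
    rw [he2.tsum_sub ho]
    simp [zero_cpow hs0, mul_add]
  refine ⟨?_, by rw [hF, hEE]⟩
  rw [hEE, eq_sub_of_add_eq' hz.symm, hz2, sub_eq_add_neg (1 : ℂ), cpow_add _ _ two_ne_zero, cpow_one]
  ring

lemma expZeta_half (s : ℂ) (hs : s ≠ 1) :
    HurwitzZeta.expZeta ((1 / 2 : ℝ) : UnitAddCircle) s = (2 ^ (1 - s) - 1) * riemannZeta s := by
  have h2 : {s : ℂ | 1 < s.re} ∈ nhds (2 : ℂ) :=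
    (isOpen_lt continuous_const continuous_re).mem_nhds (by simp)
  refine AnalyticOnNhd.eqOn_of_preconnected_of_eventuallyEq (𝕜 := ℂ) (U := {1}ᶜ) (z₀ := 2)
    (g := fun s => (2 ^ (1 - s) - 1) * riemannZeta s) ?_ ?_
    (isConnected_compl_singleton_of_one_lt_rank (by simp) 1).isPreconnected (by simp) ?_ hs
  · exact (HurwitzZeta.differentiable_expZeta_of_ne_zero half_ne).differentiableOn.analyticOnNhd
      isOpen_compl_singleton
  · refine DifferentiableOn.analyticOnNhd (fun z hz => ?_) isOpen_compl_singleton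
    refine DifferentiableAt.differentiableWithinAt ?_
    refine DifferentiableAt.mul ?_ (differentiableAt_riemannZeta hz)
    exact ((differentiableAt_id.const_sub 1).const_cpow (Or.inl two_ne_zero)).sub_const 1
  · filter_upwards [h2] with z hz using (eta_re z hz).1

lemma F_eq (s : ℂ) (hs : 0 < s.re) :
    ∑' k, pairTerm k s = HurwitzZeta.expZeta ((1 / 2 : ℝ) : UnitAddCircle) s := by
  have h2 : {s : ℂ | 1 < s.re} ∈ nhds (2 : ℂ) :=
    (isOpen_lt continuous_const continuous_re).mem_nhds (by simp)
  have ho : IsOpen {s : ℂ | 0 < s.re} := isOpen_lt continuous_const continuous_re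
  refine AnalyticOnNhd.eqOn_of_preconnected_of_eventuallyEq (𝕜 := ℂ) (U := {s : ℂ | 0 < s.re})
    (z₀ := 2) (f := fun s => ∑' k, pairTerm k s) (diff_F.analyticOnNhd ho)
    ((HurwitzZeta.differentiable_expZeta_of_ne_zero half_ne).differentiableOn.analyticOnNhd ho)
    (convex_halfSpace_re_gt 0).isPreconnected (by simp) ?_ hs
  filter_upwards [h2] with z hz using (eta_re z hz).2

lemma sum_pair (K : ℕ) (s : ℂ) :
    ∑ k ∈ Finset.range K, pairTerm k s =
      ∑ l ∈ Finset.Icc 1 (2 * K), (-1 : ℂ) ^ l / (l : ℂ) ^ s := by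
  induction K with
  | zero => simp
  | succ n ih =>
    rw [Finset.sum_range_succ, ih, show 2 * (n + 1) = 2 * n + 1 + 1 by ring,
      Finset.sum_Icc_succ_top (by omega), Finset.sum_Icc_succ_top (by omega)]
    simp only [pairTerm, pow_succ, pow_mul]
    push_cast
    ring_nf

lemma sum_sign (n : ℕ) : ‖∑ k ∈ Finset.Icc 0 n, (if k = 0 then 0 else (-1 : ℂ) ^ k)‖ ≤ 1 := by
  have : ∑ k ∈ Finset.Icc 0 n, (if k = 0 then 0 else (-1 : ℂ) ^ k) = if Even n then 0 else -1 := by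
    induction n with
    | zero => simp
    | succ n ih =>
      rw [Finset.sum_Icc_succ_top (by omega), ih]
      by_cases h : Even n
      · simp [h, Nat.even_add_one, h.neg_one_pow, pow_succ]
      · simp [h, Nat.even_add_one, (Nat.not_even_iff_odd.1 h).neg_one_pow, pow_succ]
  rw [this]
  split_ifs <;> simp

lemma tail_bound (s : ℂ) (hs : 0 < s.re) (N M : ℝ) (hN : 1 ≤ N) (hM : N ≤ M) :
    ‖∑ l ∈ Finset.Ioc ⌊N⌋₊ ⌊M⌋₊, (-1 : ℂ) ^ l / (l : ℂ) ^ s‖ ≤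
      M ^ (-s.re) + (1 + ‖s‖ / s.re) * N ^ (-s.re) := by
  have hN0 : 0 < N := by linarith
  have hs0 : -s ≠ 0 := by
    intro h
    have : s = 0 := by simpa using h
    simp [this] at hs
  have hab := sum_mul_eq_sub_sub_integral_mul (a := N) (b := M) (f := fun x : ℝ => (x : ℂ) ^ (-s))
    (fun k : ℕ => if k = 0 then 0 else (-1 : ℂ) ^ k) hN0.le hM
    (fun t ht => (hasDerivAt_ofReal_cpow_const (hN0.trans_le ht.1).ne' hs0).differentiableAt)
    ((Iff.mpr integrableOn_Ici_iff_integrableOn_Ioi <|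
      integrableOn_Ioi_deriv_ofReal_cpow hN0 (by simpa using hs)).mono_set Set.Icc_subset_Ici_self)
  have hsum : ∑ l ∈ Finset.Ioc ⌊N⌋₊ ⌊M⌋₊, (-1 : ℂ) ^ l / (l : ℂ) ^ s =
      ∑ k ∈ Finset.Ioc ⌊N⌋₊ ⌊M⌋₊, ((k : ℝ) : ℂ) ^ (-s) * (if k = 0 then 0 else (-1 : ℂ) ^ k) := by
    refine Finset.sum_congr rfl fun k hk => ?_
    have : k ≠ 0 := by have := (Finset.mem_Ioc.1 hk).1; omega
    simp [this, cpow_neg, div_eq_mul_inv, mul_comm]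
  rw [hsum, hab]
  have hn : ∀ t : ℝ, 0 < t → ‖(t : ℂ) ^ (-s)‖ = t ^ (-s.re) := fun t ht => by
    rw [norm_cpow_eq_rpow_re_of_pos ht, neg_re]
  have hint : ‖∫ t in Set.Ioc N M, deriv (fun x : ℝ => (x : ℂ) ^ (-s)) t *
      ∑ k ∈ Finset.Icc 0 ⌊t⌋₊, (if k = 0 then 0 else (-1 : ℂ) ^ k)‖ ≤ ‖s‖ / s.re * N ^ (-s.re) := by
    have hI : MeasureTheory.IntegrableOn (fun t : ℝ => ‖s‖ * t ^ (-s.re - 1)) (Set.Ioi N) :=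
      (integrableOn_Ioi_rpow_of_lt (by linarith) hN0).const_mul _
    calc _ ≤ ∫ t in Set.Ioc N M, ‖s‖ * t ^ (-s.re - 1) := by
            refine MeasureTheory.norm_integral_le_of_norm_le (hI.mono_set Set.Ioc_subset_Ioi_self) ?_
            refine (MeasureTheory.ae_restrict_iff' measurableSet_Ioc).2 (.of_forall fun t ht => ?_)
            have ht0 : 0 < t := hN0.trans ht.1
            rw [deriv_ofReal_cpow_const ht0.ne' hs0, norm_mul, norm_mul, norm_neg,
              norm_cpow_eq_rpow_re_of_pos ht0]
            have : (-s - 1).re = -s.re - 1 := by simp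
            rw [this]
            exact mul_le_of_le_one_right (by positivity) (sum_sign _)
      _ ≤ ∫ t in Set.Ioi N, ‖s‖ * t ^ (-s.re - 1) := by
            refine MeasureTheory.setIntegral_mono_set hI ?_ (Set.Ioc_subset_Ioi_self.eventuallyLE)
            refine (MeasureTheory.ae_restrict_iff' measurableSet_Ioi).2 (.of_forall fun t ht => ?_)
            have ht0 : 0 < t := hN0.trans ht
            simp only [Pi.zero_apply]
            positivity
      _ = _ := by
            rw [MeasureTheory.integral_const_mul, integral_Ioi_rpow_of_lt (by linarith) hN0,
              sub_add_cancel, neg_div_neg_eq]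
            ring
  refine (norm_sub_le _ _).trans ?_
  refine (add_le_add (norm_sub_le _ _) hint).trans ?_
  rw [norm_mul, norm_mul, hn M (by linarith), hn N hN0]
  have h1 := mul_le_of_le_one_right (by positivity : 0 ≤ N ^ (-s.re)) (sum_sign ⌊N⌋₊)
  have h2 := mul_le_of_le_one_right (Real.rpow_nonneg (by linarith) _ : 0 ≤ M ^ (-s.re)) (sum_sign ⌊M⌋₊)
  linarith

/-- If `ρ = β + iγ` with `0 < β < 1` and `(2^{1-ρ} - 1) ζ(ρ) = 0`, then for all `N ≥ 1`,
`|Σ_{l ≤ N} (-1)^l / l^ρ| ≤ (1 + |ρ|/β) N^{-β}`. -/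
theorem stmt13 (β γ : ℝ) (ρ : ℂ) (hρ : ρ = β + γ * I)
    (hβ0 : 0 < β) (hβ1 : β < 1)
    (hzero : ((2 : ℂ) ^ (1 - ρ) - 1) * riemannZeta ρ = 0)
    (N : ℝ) (hN : 1 ≤ N) :
    ‖∑ l ∈ Finset.Icc 1 ⌊N⌋₊, (-1 : ℂ) ^ l / (l : ℂ) ^ ρ‖ ≤
      (1 + ‖ρ‖ / β) * N ^ (-β) := by
  have hre : ρ.re = β := by simp [hρ]
  have hρ1 : ρ ≠ 1 := by
    intro h
    rw [h] at hre
    simp at hre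
    linarith
  have hpos : 0 < ρ.re := by rw [hre]; exact hβ0
  have hF : ∑' k, pairTerm k ρ = 0 := by rw [F_eq ρ hpos, expZeta_half ρ hρ1, hzero]
  have hlim := (summable_pairTerm ρ hpos).hasSum.tendsto_sum_nat
  rw [hF] at hlim
  simp_rw [sum_pair] at hlim
  set A := ∑ l ∈ Finset.Icc 1 ⌊N⌋₊, (-1 : ℂ) ^ l / (l : ℂ) ^ ρ with hA
  have hcast : Filter.Tendsto (fun K : ℕ => ((2 * K : ℕ) : ℝ)) Filter.atTop Filter.atTop :=
    tendsto_natCast_atTop_atTop.comp (Filter.tendsto_id.const_mul_atTop' (by norm_num))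
  have hl1 : Filter.Tendsto (fun K : ℕ => ‖(∑ l ∈ Finset.Icc 1 (2 * K), (-1 : ℂ) ^ l / (l : ℂ) ^ ρ) - A‖)
      Filter.atTop (nhds ‖A‖) := by
    simpa using (hlim.sub_const A).norm
  have hl2 : Filter.Tendsto (fun K : ℕ => ((2 * K : ℕ) : ℝ) ^ (-β) + (1 + ‖ρ‖ / β) * N ^ (-β))
      Filter.atTop (nhds ((1 + ‖ρ‖ / β) * N ^ (-β))) := by
    simpa using ((tendsto_rpow_neg_atTop hβ0).comp hcast).add_const ((1 + ‖ρ‖ / β) * N ^ (-β))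
  refine le_of_tendsto_of_tendsto hl1 hl2 ?_
  filter_upwards [hcast.eventually_ge_atTop N] with K hK
  have hb := tail_bound ρ hpos N _ hN hK
  rw [hre, Nat.floor_natCast] at hb
  have hfl : ⌊N⌋₊ ≤ 2 * K := Nat.floor_le_of_le hK
  have : (∑ l ∈ Finset.Icc 1 (2 * K), (-1 : ℂ) ^ l / (l : ℂ) ^ ρ) - A =
      ∑ l ∈ Finset.Ioc ⌊N⌋₊ (2 * K), (-1 : ℂ) ^ l / (l : ℂ) ^ ρ := by
    rw [hA, sub_eq_iff_eq_add']
    exact (Finset.sum_Ioc_consecutive _ (Nat.zero_le _) hfl).symm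
  rw [this]
  exact hb
end

section
/- Let χ be a nonprincipal Dirichlet character modulo D. Then for every complex s with σ = Re(s) > 0 and all reals 1 ≤ z < w, | Σ_{z < d ≤ w} χ(d)/d^s | ≤ (2 + 2|s|/σ) · √D · log D / z^σ. -/
section
open Finset
lemma pv_harm (m : ℕ) : ∑ a ∈ range m, (1:ℝ)/(a+1) ≤ Real.log (2*m+1) := by
  induction m with
  | zero => simp
  | succ m ih =>
    rw [sum_range_succ]
    have h := Real.le_log_one_add_of_nonneg (x := 2/(2*(m:ℝ)+1)) (by positivity)
    have e1 : 2 * (2/(2*(m:ℝ)+1)) / (2/(2*(m:ℝ)+1) + 2) = 1/((m:ℝ)+1) := by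
      have : (2*(m:ℝ)+1) ≠ 0 := by positivity
      have : (m:ℝ)+1 ≠ 0 := by positivity
      have : 2/(2*(m:ℝ)+1) + 2 = 4*(m+1)/(2*(m:ℝ)+1) := by field_simp; ring
      rw [this]; field_simp; ring
    have e2 : Real.log (2*((m+1:ℕ):ℝ)+1) = Real.log (2*m+1) + Real.log (1 + 2/(2*(m:ℝ)+1)) := by
      rw [← Real.log_mul (by positivity) (by positivity)]
      congr 1
      push_cast; field_simp; ring
    rw [e1] at h; rw [e2]; linarith

lemma pv_sin (q a : ℕ) (ha : 0 < a) (h : 2*a ≤ q) :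
    1/|Real.sin (Real.pi * a / q)| ≤ q/2 * (1/a) := by
  have hq : (0:ℝ) < q := by exact_mod_cast (by omega : 0 < q)
  have ha' : (0:ℝ) < a := by exact_mod_cast ha
  have h' : 2*(a:ℝ) ≤ q := by exact_mod_cast h
  have hp := Real.pi_pos
  have h1 := Real.mul_le_sin (x := Real.pi * a / q) (by positivity) (by
    rw [div_le_div_iff₀ hq (by norm_num)]; nlinarith)
  have e : 2 / Real.pi * (Real.pi * a / q) = 2*a/q := by field_simp
  rw [e] at h1
  have h2 : 0 < 2*(a:ℝ)/q := by positivity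
  rw [abs_of_pos (lt_of_lt_of_le h2 h1)]
  calc _ ≤ 1/(2*(a:ℝ)/q) := one_div_le_one_div_of_le h2 h1
    _ = _ := by field_simp

lemma pv_sinsum (q : ℕ) (hq : 2 ≤ q) :
    ∑ a ∈ Ico 1 q, 1/|Real.sin (Real.pi * a / q)| ≤ q * Real.log q := by
  have hq0 : (0:ℝ) < q := by exact_mod_cast (by omega : 0 < q)
  set m := q/2 with hm
  set m' := (q-1)/2 with hm'
  have hmm : q = m + m' + 1 := by omega
  rw [← sum_Ico_consecutive _ (show 1 ≤ m+1 by omega) (show m+1 ≤ q by omega)]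
  have A : ∑ a ∈ Ico 1 (m+1), 1/|Real.sin (Real.pi * a / q)| ≤ q/2 * Real.log (2*m+1) := by
    refine le_trans ?_ (mul_le_mul_of_nonneg_left (pv_harm m) (by positivity))
    rw [sum_Ico_eq_sum_range, mul_sum, Nat.add_sub_cancel]
    refine sum_le_sum fun i hi => ?_
    have := mem_range.1 hi
    have := pv_sin q (1+i) (by omega) (by omega)
    refine this.trans (le_of_eq ?_)
    push_cast; ring
  have B : ∑ a ∈ Ico (m+1) q, 1/|Real.sin (Real.pi * a / q)| ≤ q/2 * Real.log (2*m'+1) := by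
    refine le_trans ?_ (mul_le_mul_of_nonneg_left (pv_harm m') (by positivity))
    rw [sum_Ico_eq_sum_range, mul_sum, show q - (m+1) = m' by omega, ← sum_range_reflect]
    refine sum_le_sum fun i hi => ?_
    have hi := mem_range.1 hi
    have := pv_sin q (1+i) (by omega) (by omega)
    have e : (((m + 1 + (m' - 1 - i)):ℕ):ℝ) = q - ((1+i:ℕ):ℝ) := by
      rw [eq_sub_iff_add_eq]; norm_cast; omega
    rw [e, show Real.pi * ((q:ℝ) - ((1+i:ℕ):ℝ))/q = Real.pi - Real.pi * ((1+i:ℕ):ℝ)/q by field_simp,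
      Real.sin_pi_sub]
    refine this.trans (le_of_eq ?_)
    push_cast; ring
  have C : Real.log (2*m+1) + Real.log (2*m'+1) ≤ 2 * Real.log q := by
    rw [← Real.log_mul (by positivity) (by positivity), ← Real.log_rpow hq0]
    refine Real.log_le_log (by positivity) ?_
    norm_num
    have : (2*m+1)*(2*m'+1) ≤ q^2 := by
      rcases Nat.even_or_odd' q with ⟨c, hc | hc⟩
      · obtain ⟨e, rfl⟩ : ∃ e, c = e+1 := ⟨c-1, by omega⟩
        rw [show m = e+1 by omega, show m' = e by omega, hc]; nlinarith
      · rw [show m = c by omega, show m' = c by omega, hc]; nlinarith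
    exact_mod_cast this
  nlinarith

lemma pv_div (k : ℕ) : (k.divisors.card : ℝ) ≤ 2 * Real.sqrt k := by
  have h : k.divisors.card ≤ 2 * k.sqrt := by
    have h1 : (k.divisors.filter (fun d => d ≤ k.sqrt)).card ≤ k.sqrt := by
      calc _ ≤ (Ioc 0 k.sqrt).card := card_le_card (by
            intro d hd
            rw [mem_filter] at hd
            exact mem_Ioc.2 ⟨Nat.pos_of_mem_divisors hd.1, hd.2⟩)
        _ = _ := by simp
    have h2 : (k.divisors.filter (fun d => ¬ d ≤ k.sqrt)).card ≤ k.sqrt := by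
      calc _ ≤ (Ioc 0 k.sqrt).card := by
            refine card_le_card_of_injOn (fun d => k/d) ?_ ?_
            · intro d hd
              have hd := mem_filter.1 hd
              have hdk := (Nat.mem_divisors.1 hd.1)
              refine mem_coe.2 (mem_Ioc.2 ⟨Nat.div_pos (Nat.le_of_dvd (by omega) hdk.1) (Nat.pos_of_mem_divisors hd.1), ?_⟩)
              have h3 : k.sqrt + 1 ≤ d := by omega
              have h4 : k < (k.sqrt + 1) * (k.sqrt + 1) := Nat.lt_succ_sqrt k
              refine Nat.lt_succ_iff.1 ((Nat.div_lt_iff_lt_mul (by omega)).2 ?_)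
              exact lt_of_lt_of_le h4 (Nat.mul_le_mul_left _ h3)
            · intro d hd e he hde
              have hd := Nat.mem_divisors.1 (mem_filter.1 hd).1
              have he := Nat.mem_divisors.1 (mem_filter.1 he).1
              exact (Nat.div_eq_iff_eq_of_dvd_dvd hd.2 hd.1 he.1).1 hde
        _ = _ := by simp
    rw [← card_filter_add_card_filter_not (s := k.divisors) (fun d => d ≤ k.sqrt)]
    omega
  calc (k.divisors.card : ℝ) ≤ 2 * (k.sqrt:ℝ) := by exact_mod_cast h
    _ ≤ _ := by gcongr; exact Real.nat_sqrt_le_real_sqrt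

lemma pv_gauss (q : ℕ) [NeZero q] (χ : DirichletCharacter ℂ q) (hχ : χ.IsPrimitive) :
    ‖gaussSum χ ZMod.stdAddChar‖ = Real.sqrt q := by
  have h := congrFun (ZMod.dft_dft (χ : ZMod q → ℂ)) (-1)
  have e : ZMod.dft (χ : ZMod q → ℂ) = fun k => χ⁻¹ (-k) * gaussSum χ ZMod.stdAddChar := by
    funext k; exact hχ.fourierTransform_eq_inv_mul_gaussSum k
  rw [e, ZMod.dft_apply] at h
  have h2 : ∑ j : ZMod q, ZMod.stdAddChar (-(j * -1)) • (χ⁻¹ (-j) * gaussSum χ ZMod.stdAddChar)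
      = gaussSum χ ZMod.stdAddChar * star (gaussSum χ ZMod.stdAddChar) := by
    rw [star_gaussSum_eq, gaussSum.eq_def χ⁻¹, mul_sum]
    refine Fintype.sum_equiv (Equiv.neg _) _ _ fun j => ?_
    simp [AddChar.inv_apply]
    ring
  rw [h2] at h
  simp only [neg_neg, map_one, smul_eq_mul, mul_one] at h
  have h3 := congrArg norm h
  rw [norm_mul, norm_star] at h3
  rw [Complex.norm_natCast] at h3
  rw [← h3, Real.sqrt_mul_self (norm_nonneg _)]

lemma pv_geom (q : ℕ) [NeZero q] (k : ZMod q) (hk : k ≠ 0) (a b : ℕ) :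
    ‖∑ n ∈ Ioc a b, (ZMod.stdAddChar (k * (n : ZMod q)) : ℂ)‖ ≤
      1/|Real.sin (Real.pi * k.val / q)| := by
  have hq : (q:ℝ) ≠ 0 := by exact_mod_cast NeZero.ne q
  set ζ : ℂ := ZMod.stdAddChar k with hζ
  have hz1 : ζ ≠ 1 := by
    intro h
    have : (ZMod.stdAddChar k : ℂ) = ZMod.stdAddChar (0 : ZMod q) := by
      rw [← hζ, h, AddChar.map_zero_eq_one]
    exact hk (ZMod.injective_stdAddChar this)
  have hn : ‖ζ‖ = 1 := AddChar.norm_apply _ _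
  have hp : ∀ n : ℕ, (ZMod.stdAddChar (k * (n : ZMod q)) : ℂ) = ζ^n := by
    intro n
    rw [mul_comm, ← nsmul_eq_mul, AddChar.map_nsmul_eq_pow]
  simp_rw [hp]
  have hs : ‖ζ - 1‖ = 2 * |Real.sin (Real.pi * k.val / q)| := by
    have : ζ = Complex.exp (Complex.I * ((2 * Real.pi * k.val / q : ℝ):ℂ)) := by
      rw [hζ, ZMod.stdAddChar_apply, ZMod.toCircle_apply]
      congr 1
      push_cast; ring
    rw [this, Complex.norm_exp_I_mul_ofReal_sub_one]
    rw [norm_mul, Real.norm_eq_abs, Real.norm_eq_abs, abs_two]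
    congr 3 <;> ring
  have hpos : 0 < ‖ζ - 1‖ := norm_pos_iff.2 (sub_ne_zero.2 hz1)
  rcases le_total a b with hab | hab
  · have : Ioc a b = Ico (a+1) (b+1) := by ext; simp only [mem_Ioc, mem_Ico]; omega
    rw [this, geom_sum_Ico hz1 (by omega), norm_div]
    have h1 : ‖ζ^(b+1) - ζ^(a+1)‖ ≤ 2 := by
      refine (norm_sub_le _ _).trans ?_
      rw [norm_pow, norm_pow, hn]; norm_num
    have h5 : 0 < |Real.sin (Real.pi * k.val / q)| := by linarith
    rw [hs, div_le_div_iff₀ (by linarith) h5]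
    nlinarith
  · rw [Ioc_eq_empty (by omega)]; simp

lemma pv_prim (q : ℕ) [NeZero q] (χ : DirichletCharacter ℂ q) (hχ : χ.IsPrimitive) (hq : 2 ≤ q)
    (hsin : ∑ a ∈ Ico 1 q, 1/|Real.sin (Real.pi * a / q)| ≤ q * Real.log q) (a b : ℕ) :
    ‖∑ n ∈ Ioc a b, χ n‖ ≤ Real.sqrt q * Real.log q := by
  have hχ' : (χ⁻¹).IsPrimitive := by
    rw [DirichletCharacter.isPrimitive_def, DirichletCharacter.conductor_inv]; exact hχ
  have hg := pv_gauss q χ⁻¹ hχ'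
  have hq0 : (0:ℝ) < q := by exact_mod_cast (by omega : 0 < q)
  have key : (∑ n ∈ Ioc a b, χ n) * gaussSum χ⁻¹ ZMod.stdAddChar =
      ∑ k : ZMod q, χ⁻¹ k * ∑ n ∈ Ioc a b, (ZMod.stdAddChar (k * (n : ZMod q)) : ℂ) := by
    simp_rw [mul_sum, sum_mul]
    rw [sum_comm]
    refine sum_congr rfl fun n _ => ?_
    have := gaussSum_mulShift_of_isPrimitive ZMod.stdAddChar hχ' (n : ZMod q)
    rw [inv_inv] at this
    rw [← this, gaussSum]
    refine sum_congr rfl fun k _ => ?_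
    rw [AddChar.mulShift_apply, mul_comm k]
  have hb : ‖∑ k : ZMod q, χ⁻¹ k * ∑ n ∈ Ioc a b, (ZMod.stdAddChar (k * (n : ZMod q)) : ℂ)‖ ≤
      q * Real.log q := by
    refine le_trans (norm_sum_le _ _) (le_trans ?_ hsin)
    have h0 : χ⁻¹ 0 = 0 := DirichletCharacter.map_zero' _ (by omega)
    rw [← add_sum_erase univ _ (mem_univ (0 : ZMod q)), h0, zero_mul, norm_zero, zero_add]
    calc _ ≤ ∑ k ∈ univ.erase (0 : ZMod q), 1/|Real.sin (Real.pi * k.val / q)| := by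
          refine sum_le_sum fun k hk => ?_
          rw [norm_mul]
          have h1 := pv_geom q k (ne_of_mem_erase hk) a b
          have h2 := DirichletCharacter.norm_le_one χ⁻¹ k
          nlinarith [norm_nonneg (∑ n ∈ Ioc a b, (ZMod.stdAddChar (k * (n : ZMod q)) : ℂ))]
      _ ≤ _ := by
          refine le_of_eq (sum_nbij' (fun k => k.val) (fun n => (n : ZMod q)) ?_ ?_ ?_ ?_ ?_)
          · intro k hk
            have := ne_of_mem_erase hk
            have := (ZMod.val_ne_zero k).2 this
            exact mem_Ico.2 ⟨by omega, ZMod.val_lt k⟩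
          · intro n hn
            have hn := mem_Ico.1 hn
            refine mem_erase.2 ⟨?_, mem_univ _⟩
            intro h
            rw [ZMod.natCast_eq_zero_iff] at h
            exact absurd (Nat.le_of_dvd (by omega) h) (by omega)
          · intro k _; simp
          · intro n hn
            exact ZMod.val_cast_of_lt (mem_Ico.1 hn).2
          · intro k _; rfl
  rw [← key, norm_mul, hg] at hb
  have hs : 0 < Real.sqrt q := Real.sqrt_pos.2 hq0
  have := Real.mul_self_sqrt hq0.le
  refine le_of_mul_le_mul_right ?_ hs
  calc _ ≤ _ := hb
    _ = _ := by rw [mul_right_comm, this]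

lemma pv_imprim (D : ℕ) [NeZero D] (χ : DirichletCharacter ℂ D)
    (B : ℝ)
    (hB : ∀ a b : ℕ, ‖∑ n ∈ Ioc a b, χ.primitiveCharacter n‖ ≤ B) (a b : ℕ) :
    ‖∑ n ∈ Ioc a b, χ n‖ ≤ ((D / χ.conductor).divisors.card : ℝ) * B := by
  set ψ := χ.primitiveCharacter with hψ
  set k := D / χ.conductor with hk
  have hD : D ≠ 0 := NeZero.ne D
  have hcd : χ.conductor * k = D := Nat.mul_div_cancel' χ.conductor_dvd_level
  have hk0 : k ≠ 0 := by rintro h; rw [h] at hcd; simp at hcd; omega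
  have h1 : ∀ n ∈ Ioc a b, χ n = ∑ d ∈ k.divisors, if d ∣ n then (ArithmeticFunction.moebius d : ℂ) * ψ n else 0 := by
    intro n hn
    have hn0 : 0 < n := by have := mem_Ioc.1 hn; omega
    rw [← sum_filter, ← sum_mul]
    have e : k.divisors.filter (fun d => d ∣ n) = (Nat.gcd k n).divisors := by
      ext d
      simp [Nat.dvd_gcd_iff, hk0]
    have e2 : ∑ d ∈ (Nat.gcd k n).divisors, (ArithmeticFunction.moebius d : ℂ) = if Nat.gcd k n = 1 then 1 else 0 := by
      have := congrArg (fun f => f (Nat.gcd k n)) (ArithmeticFunction.moebius_mul_coe_zeta)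
      simp only [ArithmeticFunction.coe_mul_zeta_apply, ArithmeticFunction.one_apply] at this
      exact_mod_cast congrArg (Int.cast : ℤ → ℂ) this
    rw [e, e2]
    by_cases hc : IsCoprime (n:ℤ) (D:ℤ)
    · have h3 := χ.primitiveCharacter_apply_of_isCoprime hc
      have h4 : Nat.Coprime n D := Nat.isCoprime_iff_coprime.1 hc
      have h5 : Nat.gcd k n = 1 := (Nat.Coprime.coprime_dvd_right ⟨χ.conductor, by rw [mul_comm]; exact hcd.symm⟩ h4).symm
      rw [if_pos h5, one_mul]
      simpa using h3.symm
    · have h3 := (DirichletCharacter.apply_eq_zero_iff χ n).2 hc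
      have h3' : χ (n : ZMod D) = 0 := by simpa using h3
      rw [h3']
      by_cases h5 : Nat.gcd k n = 1
      · rw [if_pos h5, one_mul]
        have : ¬ IsCoprime (n:ℤ) (χ.conductor:ℤ) := by
          intro h6
          apply hc
          rw [Nat.isCoprime_iff_coprime] at h6 ⊢
          rw [← hcd]
          exact Nat.Coprime.mul_right h6 (Nat.Coprime.symm h5)
        have := (DirichletCharacter.apply_eq_zero_iff ψ n).2 this
        simpa using this.symm
      · rw [if_neg h5, zero_mul]
  rw [sum_congr rfl h1, sum_comm]
  refine (norm_sum_le _ _).trans ?_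
  rw [← nsmul_eq_mul]
  refine sum_le_card_nsmul _ _ _ fun d hd => ?_
  have hd0 : 0 < d := Nat.pos_of_mem_divisors hd
  rw [← sum_filter]
  have e : ∑ n ∈ (Ioc a b).filter (fun n => d ∣ n), (ArithmeticFunction.moebius d : ℂ) * ψ n
      = (ArithmeticFunction.moebius d : ℂ) * ψ d * ∑ m ∈ Ioc (a/d) (b/d), ψ m := by
    rw [mul_sum]
    refine sum_nbij' (fun n => n / d) (fun m => d * m) ?_ ?_ ?_ ?_ ?_
    · intro n hn
      obtain ⟨h, m, rfl⟩ := mem_filter.1 hn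
      have h := mem_Ioc.1 h
      rw [Nat.mul_div_cancel_left _ hd0, mem_Ioc, Nat.div_lt_iff_lt_mul hd0, Nat.le_div_iff_mul_le hd0, mul_comm m]
      exact h
    · intro m hm
      rw [mem_Ioc, Nat.div_lt_iff_lt_mul hd0, Nat.le_div_iff_mul_le hd0, mul_comm m] at hm
      exact mem_filter.2 ⟨mem_Ioc.2 hm, dvd_mul_right _ _⟩
    · intro n hn
      exact Nat.mul_div_cancel' (mem_filter.1 hn).2
    · intro m hm
      exact Nat.mul_div_cancel_left _ hd0
    · intro n hn
      obtain ⟨h, m, rfl⟩ := mem_filter.1 hn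
      rw [Nat.mul_div_cancel_left _ hd0]
      push_cast
      rw [map_mul]; ring
  rw [e, norm_mul, norm_mul]
  have h6 : ‖(ArithmeticFunction.moebius d : ℂ)‖ ≤ 1 := by
    rw [Complex.norm_intCast]
    exact_mod_cast ArithmeticFunction.abs_moebius_le_one
  have h7 := DirichletCharacter.norm_le_one ψ d
  have h8 : ‖(ArithmeticFunction.moebius d : ℂ)‖ * ‖ψ d‖ ≤ 1 := mul_le_one₀ h6 (norm_nonneg _) h7
  calc _ ≤ 1 * ‖∑ m ∈ Ioc (a/d) (b/d), ψ m‖ := by gcongr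
    _ ≤ B := by rw [one_mul]; exact hB _ _

lemma pv_abel (c : ℕ → ℂ) (B : ℝ) (hB : ∀ a b : ℕ, ‖∑ n ∈ Ioc a b, c n‖ ≤ B)
    (s : ℂ) (hs : 0 < s.re) (z w : ℝ) (hz : 1 ≤ z) (hzw : z < w) :
    ‖∑ d ∈ Finset.Ioc ⌊z⌋₊ ⌊w⌋₊, c d / (d : ℂ) ^ s‖ ≤ B * (‖s‖ / s.re) / z ^ s.re := by
  have hB0 : 0 ≤ B := (norm_nonneg _).trans (hB 0 0)
  have hz0 : 0 < z := by linarith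
  have hw0 : 0 < w := by linarith
  have hs0 : s ≠ 0 := by rintro rfl; simp at hs
  set c' : ℕ → ℂ := fun n => if ⌊z⌋₊ < n then c n else 0 with hc'
  set f : ℝ → ℂ := fun t => (t:ℂ)^(-s) with hf
  have hS : ∀ N : ℕ, ∑ k ∈ Icc 0 N, c' k = ∑ k ∈ Ioc ⌊z⌋₊ N, c k := by
    intro N
    rw [← sum_filter]
    congr 1
    ext k; simp; omega
  have hder : ∀ t : ℝ, 0 < t → HasDerivAt f (-s * (t:ℂ)^(-s-1)) t := by
    intro t ht
    exact hasDerivAt_ofReal_cpow_const (x := t) ht.ne' (r := -s) (neg_ne_zero.2 hs0)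
  have hcont : ContinuousOn (fun t : ℝ => -s * (t:ℂ)^(-s-1)) (Set.Icc z w) := by
    intro t ht
    refine ContinuousAt.continuousWithinAt ?_
    have ht0 : 0 < t := lt_of_lt_of_le hz0 ht.1
    exact continuousAt_const.mul (Complex.continuousAt_ofReal_cpow_const _ _ (Or.inr ht0.ne'))
  have hderiv : Set.EqOn (deriv f) (fun t : ℝ => -s * (t:ℂ)^(-s-1)) (Set.Icc z w) :=
    fun t ht => (hder t (lt_of_lt_of_le hz0 ht.1)).deriv
  have key := sum_mul_eq_sub_sub_integral_mul c' (f := f) hz0.le hzw.le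
    (fun t ht => (hder t (lt_of_lt_of_le hz0 ht.1)).differentiableAt)
    ((hcont.congr hderiv).integrableOn_Icc)
  have e1 : ∑ d ∈ Ioc ⌊z⌋₊ ⌊w⌋₊, c d / (d : ℂ) ^ s = ∑ k ∈ Ioc ⌊z⌋₊ ⌊w⌋₊, f k * c' k := by
    refine sum_congr rfl fun k hk => ?_
    simp only [hf, hc', if_pos (mem_Ioc.1 hk).1, Complex.cpow_neg, Complex.ofReal_natCast]
    field_simp
  rw [e1, key]
  simp_rw [hS]
  rw [Ioc_self, sum_empty, mul_zero, sub_zero]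
  have hfn : ‖f w‖ = w^(-s.re) := by
    simp only [hf]; rw [Complex.norm_cpow_eq_rpow_re_of_pos hw0]; simp
  have hint : ‖∫ t in Set.Ioc z w, deriv f t * ∑ k ∈ Ioc ⌊z⌋₊ ⌊t⌋₊, c k‖ ≤
      ∫ t in Set.Ioc z w, ‖s‖ * B * t^(-s.re-1) := by
    refine MeasureTheory.norm_integral_le_of_norm_le ?_ ?_
    · refine (ContinuousOn.integrableOn_Icc ?_).mono_set Set.Ioc_subset_Icc_self
      intro t ht
      have ht0 : 0 < t := lt_of_lt_of_le hz0 ht.1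
      exact (continuousAt_const.mul (Real.continuousAt_rpow_const _ _ (Or.inl ht0.ne'))).continuousWithinAt
    · filter_upwards [MeasureTheory.ae_restrict_mem measurableSet_Ioc] with t ht
      have ht0 : 0 < t := lt_trans hz0 ht.1
      rw [norm_mul, (hder t ht0).deriv, norm_mul, norm_neg, Complex.norm_cpow_eq_rpow_re_of_pos ht0]
      have := hB ⌊z⌋₊ ⌊t⌋₊
      have h2 : 0 ≤ t^(-s.re-1) := by positivity
      simp only [Complex.sub_re, Complex.neg_re, Complex.one_re]
      calc _ ≤ ‖s‖ * t^(-s.re-1) * B := by gcongr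
        _ = _ := by ring
  have hval : ∫ t in Set.Ioc z w, ‖s‖ * B * t^(-s.re-1) = ‖s‖ * B * ((z^(-s.re) - w^(-s.re))/s.re) := by
    rw [← intervalIntegral.integral_of_le hzw.le, intervalIntegral.integral_const_mul,
      integral_rpow]
    · congr 1
      rw [sub_add_cancel]
      field_simp; ring
    · right
      refine ⟨by linarith, ?_⟩
      rw [Set.uIcc_of_le hzw.le]
      intro h; linarith [h.1]
  have hsn : 1 ≤ ‖s‖ / s.re := by
    rw [le_div_iff₀ hs, one_mul]; exact (le_abs_self _).trans (Complex.abs_re_le_norm s)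
  have hwp : 0 ≤ w^(-s.re) := by positivity
  refine (norm_sub_le _ _).trans ?_
  rw [norm_mul, hfn]
  rw [hval] at hint
  have h9 := mul_le_mul_of_nonneg_left (hB ⌊z⌋₊ ⌊w⌋₊) hwp
  have e2 : B * (‖s‖ / s.re) / z ^ s.re = B * (‖s‖ / s.re) * z^(-s.re) := by
    rw [Real.rpow_neg hz0.le]; rfl
  have e3 : ‖s‖ * B * ((z^(-s.re) - w^(-s.re))/s.re) = B * (‖s‖ / s.re) * z^(-s.re) - B * (‖s‖ / s.re) * w^(-s.re) := by
    ring
  rw [e2]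
  rw [e3] at hint
  have h10 : w^(-s.re) * B ≤ B * (‖s‖ / s.re) * w^(-s.re) := by
    have := mul_le_mul_of_nonneg_left hsn (mul_nonneg hwp hB0)
    linarith
  linarith

end


/-- For a nonprincipal Dirichlet character `χ` mod `D`, `σ = Re(s) > 0`, and
`1 ≤ z < w`: `|Σ_{z < d ≤ w} χ(d)/d^s| ≤ (2 + 2|s|/σ) √D log D / z^σ`. -/
theorem stmt14 (D : ℕ) [NeZero D] (χ : DirichletCharacter ℂ D) (hχ : χ ≠ 1)
    (s : ℂ) (hs : 0 < s.re) (z w : ℝ) (hz : 1 ≤ z) (hzw : z < w) :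
    ‖∑ d ∈ Finset.Ioc ⌊z⌋₊ ⌊w⌋₊, χ d / (d : ℂ) ^ s‖ ≤
      (2 + 2 * ‖s‖ / s.re) * Real.sqrt D * Real.log D / z ^ s.re := by
  have hc2 : 2 ≤ χ.conductor := by
    have h0 := DirichletCharacter.conductor_ne_zero χ
    have h1 : χ.conductor ≠ 1 := fun h =>
      hχ (DirichletCharacter.eq_one_iff_conductor_eq_one.2 h)
    omega
  have : NeZero χ.conductor := ⟨by omega⟩
  have hP := pv_prim χ.conductor χ.primitiveCharacter χ.primitiveCharacter_isPrimitive hc2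
    (pv_sinsum _ hc2)
  have hI := pv_imprim D χ _ hP
  have hdiv := pv_div (D / χ.conductor)
  have hcd : (D / χ.conductor) * χ.conductor = D := Nat.div_mul_cancel χ.conductor_dvd_level
  have hsq : Real.sqrt ((D / χ.conductor : ℕ) : ℝ) * Real.sqrt χ.conductor = Real.sqrt D := by
    rw [← Real.sqrt_mul (by positivity), ← Nat.cast_mul, hcd]
  have hlog : Real.log χ.conductor ≤ Real.log D := by
    refine Real.log_le_log (by exact_mod_cast (by omega : 0 < χ.conductor)) ?_
    exact_mod_cast Nat.le_of_dvd (Nat.pos_of_ne_zero (NeZero.ne D)) χ.conductor_dvd_level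
  have hlog0 : 0 ≤ Real.log χ.conductor := Real.log_natCast_nonneg _
  have hlogD : 0 ≤ Real.log D := Real.log_natCast_nonneg _
  have hB : ∀ a b : ℕ, ‖∑ n ∈ Finset.Ioc a b, χ n‖ ≤ 2 * Real.sqrt D * Real.log D := by
    intro a b
    refine (hI a b).trans ?_
    calc _ ≤ (2 * Real.sqrt ((D / χ.conductor : ℕ) : ℝ)) *
          (Real.sqrt χ.conductor * Real.log χ.conductor) := by gcongr
      _ = 2 * Real.sqrt D * Real.log χ.conductor := by rw [← hsq]; ring
      _ ≤ _ := by gcongr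
  refine (pv_abel (fun n => χ n) _ hB s hs z w hz hzw).trans ?_
  have hz0 : 0 < z := by linarith
  refine div_le_div_of_nonneg_right ?_ (by positivity)
  have : 0 ≤ Real.sqrt D * Real.log D := by positivity
  have e : (2 + 2 * ‖s‖ / s.re) * Real.sqrt D * Real.log D =
    2 * (Real.sqrt D * Real.log D) + 2 * Real.sqrt D * Real.log D * (‖s‖ / s.re) := by ring
  rw [e]
  linarith
end

section
/- There exists a constant B > 0 such that for all real X ≥ 1, | Σ_{n ≤ X} τ(n)/√n − √X·(2 log X + 4C − 4) | ≤ B, where C is the Euler–Mascheroni constant. -/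
noncomputable def AA (n : ℕ) : ℝ := ∑ k ∈ Finset.Icc 1 n, (1:ℝ) / Real.sqrt k

lemma AA_succ (n : ℕ) : AA (n+1) = AA n + 1 / Real.sqrt (n+1) := by
  unfold AA
  rw [Finset.sum_Icc_succ_top (by omega)]
  push_cast; rfl

lemma sqrt_step (x : ℝ) (hx : 0 ≤ x) :
    1 / Real.sqrt (x+1) ≤ 2 * (Real.sqrt (x+1) - Real.sqrt x) ∧
    2 * (Real.sqrt (x+2) - Real.sqrt (x+1)) ≤ 1 / Real.sqrt (x+1) := by
  have h1 := Real.sq_sqrt hx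
  have h2 := Real.sq_sqrt (by linarith : 0 ≤ x+1)
  have h3 := Real.sq_sqrt (by linarith : 0 ≤ x+2)
  have p1 := Real.sqrt_nonneg x
  have p2 := Real.sqrt_pos.2 (by linarith : 0 < x+1)
  have p3 := Real.sqrt_nonneg (x+2)
  set a := Real.sqrt x
  set b := Real.sqrt (x+1)
  set c := Real.sqrt (x+2)
  constructor
  · rw [div_le_iff₀ p2]
    nlinarith [sq_nonneg (a-b)]
  · rw [le_div_iff₀ p2]
    nlinarith [sq_nonneg (c-b)]

lemma AA_const : ∃ c : ℝ, ∀ n : ℕ, AA n - 2 * Real.sqrt (n+1) ≤ c ∧ c ≤ AA n - 2 * Real.sqrt n := by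
  have hu : Monotone (fun n : ℕ => AA n - 2 * Real.sqrt (n+1)) := by
    apply monotone_nat_of_le_succ
    intro n
    have := (sqrt_step n n.cast_nonneg).2
    simp only [AA_succ]
    push_cast
    rw [show (n:ℝ)+1+1 = n+2 by ring]
    linarith
  have hv : Antitone (fun n : ℕ => AA n - 2 * Real.sqrt n) := by
    apply antitone_nat_of_succ_le
    intro n
    have := (sqrt_step n n.cast_nonneg).1
    simp only [AA_succ]
    push_cast
    linarith
  have huv : ∀ m n : ℕ, AA m - 2 * Real.sqrt (m+1) ≤ AA n - 2 * Real.sqrt n := by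
    intro m n
    have h1 := hu (le_max_left m n)
    have h2 := hv (le_max_right m n)
    have h3 : Real.sqrt ((max m n : ℕ):ℝ) ≤ Real.sqrt ((max m n : ℕ)+1) :=
      Real.sqrt_le_sqrt (by linarith)
    simp only at h1 h2
    linarith
  refine ⟨⨆ n : ℕ, (AA n - 2 * Real.sqrt (n+1)), fun n => ⟨?_, ?_⟩⟩
  · exact le_ciSup (f := fun n : ℕ => AA n - 2 * Real.sqrt (n+1))
      ⟨AA 0 - 2 * Real.sqrt (0:ℕ), by rintro _ ⟨m, rfl⟩; exact huv m 0⟩ n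
  · exact ciSup_le fun m => huv m n

lemma AA_est : ∃ c : ℝ, ∀ t : ℝ, 1 ≤ t →
    |AA ⌊t⌋₊ - 2 * Real.sqrt t - c| ≤ 2 / Real.sqrt t := by
  obtain ⟨c, hc⟩ := AA_const
  refine ⟨c, fun t ht => ?_⟩
  obtain ⟨h1, h2⟩ := hc ⌊t⌋₊
  have l1 : (⌊t⌋₊:ℝ) ≤ t := Nat.floor_le (by linarith)
  have l2 : t < ⌊t⌋₊ + 1 := Nat.lt_floor_add_one t
  have s1 := Real.sqrt_le_sqrt l1
  have s2 := Real.sqrt_le_sqrt l2.le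
  have p : 0 < Real.sqrt t := Real.sqrt_pos.2 (by linarith)
  have q1 := Real.sq_sqrt (Nat.cast_nonneg (α := ℝ) ⌊t⌋₊)
  have q2 := Real.sq_sqrt (by linarith : (0:ℝ) ≤ ⌊t⌋₊ + 1)
  have n1 := Real.sqrt_nonneg (⌊t⌋₊:ℝ)
  have key : Real.sqrt (⌊t⌋₊ + 1) - Real.sqrt (⌊t⌋₊:ℝ) ≤ 1 / Real.sqrt t := by
    rw [le_div_iff₀ p]
    nlinarith
  have e : 2 / Real.sqrt t = 2 * (1 / Real.sqrt t) := by ring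
  rw [abs_le, e]
  constructor <;> linarith

lemma HH_est (t : ℝ) (ht : 1 ≤ t) :
    |(∑ k ∈ Finset.Icc 1 ⌊t⌋₊, (1:ℝ) / k) - Real.log t - Real.eulerMascheroniConstant| ≤ 2 / t := by
  set n := ⌊t⌋₊ with hn
  have hn1 : 1 ≤ n := Nat.le_floor (by simpa using ht)
  have hn1' : (1:ℝ) ≤ n := by exact_mod_cast hn1
  have l1 : (n:ℝ) ≤ t := Nat.floor_le (by linarith)
  have l2 : t < n + 1 := Nat.lt_floor_add_one t
  have e : (∑ k ∈ Finset.Icc 1 n, (1:ℝ) / k) = (harmonic n : ℝ) := by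
    rw [harmonic_eq_sum_Icc]; push_cast; simp
  have h1 := Real.eulerMascheroniSeq_lt_eulerMascheroniConstant n
  have h2 := Real.eulerMascheroniConstant_lt_eulerMascheroniSeq' n
  simp only [Real.eulerMascheroniSeq] at h1
  simp only [Real.eulerMascheroniSeq', if_neg (by omega : n ≠ 0)] at h2
  have g1 := Real.log_le_log (by linarith) l1
  have g2 := Real.log_le_log (by linarith) l2.le
  have g3 : Real.log (n+1) - Real.log n ≤ 1 / n := by
    rw [← Real.log_div (by linarith) (by linarith)]
    refine (Real.log_le_sub_one_of_pos (by positivity)).trans (le_of_eq ?_)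
    field_simp; ring
  have g4 : (1:ℝ) / n ≤ 2 / t := by
    rw [div_le_div_iff₀ (by linarith) (by linarith)]; linarith
  rw [e, abs_le]
  constructor <;> linarith

lemma hyper (N M : ℕ) (h1 : M * M ≤ N) (h2 : N < (M+1)*(M+1)) :
    (∑ n ∈ Finset.Icc 1 N, (n.divisors.card : ℝ) / Real.sqrt n) =
      2 * (∑ a ∈ Finset.Icc 1 M, (1:ℝ) / Real.sqrt a * AA (N / a)) - AA M ^ 2 := by
  classical
  let g : ℕ × ℕ → ℝ := fun p => 1 / Real.sqrt p.1 * (1 / Real.sqrt p.2)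
  let P := (Finset.Icc 1 N ×ˢ Finset.Icc 1 N).filter (fun p => p.1 * p.2 ≤ N)
  have hL : (∑ n ∈ Finset.Icc 1 N, (n.divisors.card : ℝ) / Real.sqrt n) = ∑ p ∈ P, g p := by
    rw [← Finset.sum_fiberwise_of_maps_to (s := P) (t := Finset.Icc 1 N) (g := fun p => p.1 * p.2)]
    · apply Finset.sum_congr rfl
      intro n hn
      rw [Finset.mem_Icc] at hn
      have : P.filter (fun p => p.1 * p.2 = n) = n.divisorsAntidiagonal := by
        ext ⟨a, b⟩
        simp only [P, Finset.mem_filter, Finset.mem_product, Finset.mem_Icc,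
          Nat.mem_divisorsAntidiagonal]
        constructor
        · rintro ⟨_, h⟩; exact ⟨h, by omega⟩
        · rintro ⟨h, h0⟩
          have ha : 0 < a := Nat.pos_of_ne_zero (by rintro rfl; simp at h; omega)
          have hb : 0 < b := Nat.pos_of_ne_zero (by rintro rfl; simp at h; omega)
          have := Nat.le_mul_of_pos_right a hb
          have := Nat.le_mul_of_pos_left b ha
          exact ⟨⟨⟨⟨ha, by omega⟩, ⟨hb, by omega⟩⟩, by omega⟩, h⟩
      rw [this, Finset.sum_congr rfl (g := fun _ => 1 / Real.sqrt n), Finset.sum_const,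
        nsmul_eq_mul, ← Nat.map_div_right_divisors, Finset.card_map]
      · ring
      · rintro ⟨a, b⟩ hab
        rw [Nat.mem_divisorsAntidiagonal] at hab
        simp only [g]
        rw [← hab.1]; push_cast
        rw [Real.sqrt_mul (by positivity)]
        rw [div_mul_div_comm, one_mul]
    · rintro ⟨a, b⟩ h
      simp only [P, Finset.mem_filter, Finset.mem_product, Finset.mem_Icc] at h ⊢
      exact ⟨Nat.mul_pos h.1.1.1 h.1.2.1, h.2⟩
  have hMN : M ≤ N := by nlinarith
  have hA : ∑ p ∈ P.filter (fun p => p.1 ≤ M), g p =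
      ∑ a ∈ Finset.Icc 1 M, (1:ℝ) / Real.sqrt a * AA (N / a) := by
    simp only [AA, Finset.mul_sum]
    rw [Finset.sum_sigma']
    refine Finset.sum_bij' (fun p _ => ⟨p.1, p.2⟩) (fun p _ => (p.1, p.2)) ?_ ?_ ?_ ?_ ?_
    · rintro ⟨a, b⟩ h
      simp only [P, Finset.mem_filter, Finset.mem_product, Finset.mem_Icc, Finset.mem_sigma] at h ⊢
      obtain ⟨⟨⟨⟨x1,x2⟩,x3,x4⟩,x5⟩,x6⟩ := h
      exact ⟨⟨x1,x6⟩,x3,(Nat.le_div_iff_mul_le x1).2 (by rwa [mul_comm])⟩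
    · rintro ⟨a, b⟩ h
      simp only [P, Finset.mem_filter, Finset.mem_product, Finset.mem_Icc, Finset.mem_sigma] at h ⊢
      obtain ⟨⟨x1,x2⟩,x3,x4⟩ := h
      have h5 := (Nat.le_div_iff_mul_le x1).1 x4
      have := Nat.le_mul_of_pos_right b x1
      exact ⟨⟨⟨⟨x1,by omega⟩,x3,by omega⟩,by rwa [mul_comm]⟩,x2⟩
    · rintro _ _; rfl
    · rintro _ _; rfl
    · rintro _ _; rfl
  have hB : ∑ p ∈ P.filter (fun p => p.2 ≤ M), g p = ∑ p ∈ P.filter (fun p => p.1 ≤ M), g p := by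
    refine Finset.sum_bij' (fun p _ => p.swap) (fun p _ => p.swap) ?_ ?_ ?_ ?_ ?_
    · rintro ⟨a, b⟩ h
      simp only [P, Finset.mem_filter, Finset.mem_product, Prod.swap] at h ⊢
      rw [mul_comm b a]; tauto
    · rintro ⟨a, b⟩ h
      simp only [P, Finset.mem_filter, Finset.mem_product, Prod.swap] at h ⊢
      rw [mul_comm b a]; tauto
    · rintro _ _; rfl
    · rintro _ _; rfl
    · rintro ⟨a, b⟩ _; simp only [g, Prod.swap]; ring
  have hU : P.filter (fun p => p.1 ≤ M) ∪ P.filter (fun p => p.2 ≤ M) = P := by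
    rw [← Finset.filter_or]
    apply Finset.filter_true_of_mem
    rintro ⟨a, b⟩ h
    simp only [P, Finset.mem_filter, Finset.mem_product] at h ⊢
    by_contra! hc
    have := Nat.mul_le_mul (show M+1 ≤ a from hc.1) (show M+1 ≤ b from hc.2)
    omega
  have hI : P.filter (fun p => p.1 ≤ M) ∩ P.filter (fun p => p.2 ≤ M) =
      Finset.Icc 1 M ×ˢ Finset.Icc 1 M := by
    rw [← Finset.filter_and]
    ext ⟨a, b⟩
    simp only [P, Finset.mem_filter, Finset.mem_product, Finset.mem_Icc]
    constructor
    · rintro ⟨h, h'⟩; exact ⟨⟨h.1.1.1, h'.1⟩, h.1.2.1, h'.2⟩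
    · rintro ⟨⟨x1,x2⟩,x3,x4⟩
      exact ⟨⟨⟨⟨x1,by omega⟩,x3,by omega⟩,(Nat.mul_le_mul x2 x4).trans h1⟩,x2,x4⟩
  have hS := Finset.sum_union_inter (s₁ := P.filter (fun p => p.1 ≤ M))
    (s₂ := P.filter (fun p => p.2 ≤ M)) (f := g)
  rw [hU, hI, hB, hA] at hS
  have hSq : ∑ p ∈ Finset.Icc 1 M ×ˢ Finset.Icc 1 M, g p = AA M ^ 2 := by
    rw [sq, AA, Finset.sum_mul_sum, Finset.sum_product]
  rw [hL]; linarith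

/-- Hyperbola-method estimate: `Σ_{n ≤ X} τ(n)/√n = √X (2 log X + 4C - 4) + O(1)`,
where `C` is the Euler–Mascheroni constant. -/
theorem stmt15 :
    ∃ B : ℝ, 0 < B ∧ ∀ X : ℝ, 1 ≤ X →
      |(∑ n ∈ Finset.Icc 1 ⌊X⌋₊, (n.divisors.card : ℝ) / Real.sqrt n) -
          Real.sqrt X * (2 * Real.log X + 4 * Real.eulerMascheroniConstant - 4)| ≤ B := by
  obtain ⟨c, hc⟩ := AA_est
  refine ⟨24 + c^2, by positivity, fun X hX => ?_⟩
  set y := Real.sqrt X with hy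
  have hyy : y * y = X := Real.mul_self_sqrt (by linarith)
  have hy1 : 1 ≤ y := Real.one_le_sqrt.2 hX
  set N := ⌊X⌋₊ with hN
  set M := ⌊y⌋₊ with hM
  have l1 : (M:ℝ) ≤ y := Nat.floor_le (by linarith)
  have l2 : y < M + 1 := Nat.lt_floor_add_one y
  have m1 : M * M ≤ N := Nat.le_floor (by push_cast; nlinarith)
  have m2 : N < (M+1)*(M+1) := (Nat.floor_lt (by linarith)).2 (by push_cast; nlinarith)
  rw [hyper N M m1 m2]
  -- inner sums
  have hin : |(∑ a ∈ Finset.Icc 1 M, (1:ℝ) / Real.sqrt a * AA (N / a)) -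
      (2 * y * (∑ k ∈ Finset.Icc 1 M, (1:ℝ) / k) + c * AA M)| ≤ 2 := by
    have e : (∑ a ∈ Finset.Icc 1 M, (1:ℝ) / Real.sqrt a * AA (N / a)) -
      (2 * y * (∑ k ∈ Finset.Icc 1 M, (1:ℝ) / k) + c * AA M) =
      ∑ a ∈ Finset.Icc 1 M, (1:ℝ) / Real.sqrt a * (AA (N / a) - 2 * Real.sqrt (X / a) - c) := by
      unfold AA
      rw [Finset.mul_sum, Finset.mul_sum, ← Finset.sum_add_distrib, ← Finset.sum_sub_distrib]
      apply Finset.sum_congr rfl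
      intro a ha
      rw [Finset.mem_Icc] at ha
      have ha' : (0:ℝ) < a := by exact_mod_cast ha.1
      have : (1:ℝ) / a = 1 / Real.sqrt a * (1 / Real.sqrt a) := by
        rw [div_mul_div_comm, Real.mul_self_sqrt ha'.le, one_mul]
      rw [this, Real.sqrt_div (by linarith), ← hy]
      ring
    rw [e]
    refine (Finset.abs_sum_le_sum_abs _ _).trans ?_
    have : ∀ a ∈ Finset.Icc 1 M,
        |(1:ℝ) / Real.sqrt a * (AA (N / a) - 2 * Real.sqrt (X / a) - c)| ≤ 2 / y := by
      intro a ha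
      rw [Finset.mem_Icc] at ha
      have ha' : (0:ℝ) < a := by exact_mod_cast ha.1
      have haM : (a:ℝ) ≤ M := by exact_mod_cast ha.2
      have h := hc (X / a) (by rw [le_div_iff₀ ha']; nlinarith)
      rw [Nat.floor_div_natCast, ← hN] at h
      rw [abs_mul, abs_of_nonneg (by positivity)]
      refine (mul_le_mul_of_nonneg_left h (by positivity)).trans (le_of_eq ?_)
      rw [Real.sqrt_div (by linarith), ← hy]
      have := Real.sqrt_pos.2 ha'
      field_simp
    refine (Finset.sum_le_sum this).trans ?_
    rw [Finset.sum_const, nsmul_eq_mul, Nat.card_Icc, Nat.add_sub_cancel, ← mul_div_assoc,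
      div_le_iff₀ (by linarith)]
    linarith
  have hH := HH_est y hy1
  have hA := hc y hy1
  rw [← hM] at hH hA
  have hlog : Real.log X = 2 * Real.log y := by
    rw [← hyy, Real.log_mul (by linarith) (by linarith)]; ring
  rw [hlog]
  have hss : Real.sqrt y * Real.sqrt y = y := Real.mul_self_sqrt (by linarith)
  have hs1 : 1 ≤ Real.sqrt y := Real.one_le_sqrt.2 hy1
  set s := Real.sqrt y with hs
  set H := ∑ k ∈ Finset.Icc 1 M, (1:ℝ) / k
  set A := AA M
  set S := ∑ a ∈ Finset.Icc 1 M, (1:ℝ) / Real.sqrt a * AA (N / a)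
  set G := Real.eulerMascheroniConstant
  set L := Real.log y
  have hH' : |y * (H - L - G)| ≤ 2 := by
    rw [abs_mul, abs_of_nonneg (by linarith)]
    rw [le_div_iff₀ (by linarith)] at hH
    linarith
  obtain ⟨e, he⟩ : ∃ e, e = A - 2 * s - c := ⟨_, rfl⟩
  rw [← he] at hA
  have hse : |s * e| ≤ 2 := by
    rw [abs_mul, abs_of_nonneg (by linarith)]
    rw [le_div_iff₀ (by linarith)] at hA
    linarith
  have he2 : e ^ 2 ≤ 4 := by
    have : |e| ≤ 2 := hA.trans (div_le_self (by norm_num) hs1)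
    rw [← sq_abs]; nlinarith [abs_nonneg e]
  have id : 2 * S - A^2 - y * (2 * (2 * L) + 4 * G - 4) =
      2 * (S - (2 * y * H + c * A)) + 4 * (y * (H - L - G)) + c^2 - 4 * (s * e) - e^2 := by
    have : A = 2 * s + c + e := by linarith
    rw [this]
    linear_combination (-4) * hss
  rw [id]
  rw [abs_le] at *
  constructor <;> nlinarith [sq_nonneg c, sq_nonneg e]
end

section
/- There exists a constant B > 0 such that for all real X ≥ 1, | Σ_{n ≤ X} τ(n)/n − ((1/2)(log X)^2 + 2C·log X) | ≤ B, where C is the Euler–Mascheroni constant. -/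
open Finset in
lemma aux_dirichlet (N : ℕ) :
    ∑ n ∈ Icc 1 N, (n.divisors.card : ℝ) / n
      = ∑ d ∈ Icc 1 N, (d : ℝ)⁻¹ * (harmonic (N / d) : ℝ) := by
  let f : ArithmeticFunction ℝ := ⟨fun n => (n : ℝ)⁻¹, by simp⟩
  have hf : ∀ n, f n = (n : ℝ)⁻¹ := fun n => rfl
  have h := ArithmeticFunction.sum_Ioc_mul_eq_sum_sum f f N
  have hI : ∀ M : ℕ, Ioc 0 M = Icc 1 M := by
    intro M; ext x; simp only [mem_Ioc, mem_Icc]; omega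
  simp only [hI] at h
  have h1 : ∀ n ∈ Icc 1 N, (n.divisors.card : ℝ) / n = (f * f) n := by
    intro n _
    rw [ArithmeticFunction.mul_apply]
    have : ∀ x ∈ n.divisorsAntidiagonal, f x.1 * f x.2 = (n : ℝ)⁻¹ := by
      intro x hx
      rw [hf, hf, ← (Nat.mem_divisorsAntidiagonal.1 hx).1]
      push_cast
      rw [mul_inv]
    rw [sum_congr rfl this, sum_const, nsmul_eq_mul, div_eq_mul_inv,
      ← Nat.map_div_right_divisors, card_map]
  rw [sum_congr rfl h1, h]
  refine sum_congr rfl fun d _ => ?_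
  rw [harmonic_eq_sum_Icc]
  push_cast
  rfl

lemma aux_nat (n : ℕ) (hn : 1 ≤ n) :
    0 ≤ (harmonic n : ℝ) - Real.eulerMascheroniConstant - Real.log n ∧
    (harmonic n : ℝ) - Real.eulerMascheroniConstant - Real.log (n + 1) ≤ 0 ∧
    Real.log (n + 1) - Real.log n ≤ (n : ℝ)⁻¹ := by
  have h1 := Real.eulerMascheroniSeq_lt_eulerMascheroniConstant n
  have h2 := Real.eulerMascheroniConstant_lt_eulerMascheroniSeq' n
  rw [Real.eulerMascheroniSeq] at h1
  rw [Real.eulerMascheroniSeq', if_neg (by omega)] at h2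
  have hp : (0 : ℝ) < n := by exact_mod_cast hn
  refine ⟨by linarith, by linarith, ?_⟩
  rw [← Real.log_div (by positivity) (by positivity)]
  have := Real.log_le_sub_one_of_pos (x := ((n : ℝ) + 1) / n) (by positivity)
  refine this.trans (le_of_eq ?_)
  field_simp
  ring

lemma aux_floor (x : ℝ) (hx : 1 ≤ x) :
    |(harmonic ⌊x⌋₊ : ℝ) - Real.eulerMascheroniConstant - Real.log x| ≤ 2 / x := by
  have hn : 1 ≤ ⌊x⌋₊ := by rwa [Nat.one_le_floor_iff]
  obtain ⟨h1, h2, h3⟩ := aux_nat _ hn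
  have hn' : (1 : ℝ) ≤ (⌊x⌋₊ : ℝ) := by exact_mod_cast hn
  have hle : (⌊x⌋₊ : ℝ) ≤ x := Nat.floor_le (by linarith)
  have hlt := Nat.lt_floor_add_one x
  have l1 : Real.log ⌊x⌋₊ ≤ Real.log x := Real.log_le_log (by linarith) hle
  have l2 : Real.log x ≤ Real.log (⌊x⌋₊ + 1) := Real.log_le_log (by linarith) hlt.le
  have h4 : ((⌊x⌋₊ : ℕ) : ℝ)⁻¹ ≤ 2 / x := by
    rw [inv_eq_one_div, div_le_div_iff₀ (by linarith) (by linarith)]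
    linarith
  rw [abs_le]
  constructor <;> linarith

open Finset in
lemma aux_sq (N : ℕ) : ∑ d ∈ Icc 1 N, (d : ℝ)⁻¹ * (harmonic d : ℝ)
    = ((harmonic N : ℝ) ^ 2 + ∑ d ∈ Icc 1 N, ((d : ℝ)⁻¹) ^ 2) / 2 := by
  induction N with
  | zero => simp
  | succ n ih =>
    rw [sum_Icc_succ_top (by omega), sum_Icc_succ_top (by omega), ih, harmonic_succ]
    push_cast
    ring

open Finset in
lemma aux_Q (N : ℕ) : ∑ d ∈ Icc 1 (N + 1), ((d : ℝ)⁻¹) ^ 2 ≤ 2 - ((N : ℝ) + 1)⁻¹ := by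
  induction N with
  | zero => norm_num
  | succ n ih =>
    rw [sum_Icc_succ_top (by omega)]
    have : (((n + 1 + 1 : ℕ) : ℝ)⁻¹) ^ 2 ≤ ((n : ℝ) + 1)⁻¹ - (((n + 1 : ℕ) : ℝ) + 1)⁻¹ := by
      push_cast
      have hn : (0 : ℝ) ≤ n := Nat.cast_nonneg n
      rw [inv_sub_inv (by positivity) (by positivity), inv_pow, inv_eq_one_div,
        div_le_div_iff₀ (by positivity) (by positivity)]
      nlinarith
    linarith

open Finset in
lemma aux_Q2 (N : ℕ) : ∑ d ∈ Icc 1 N, ((d : ℝ)⁻¹) ^ 2 ≤ 2 := by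
  cases N with
  | zero => simp
  | succ n =>
    have : (0 : ℝ) ≤ ((n : ℝ) + 1)⁻¹ := by positivity
    linarith [aux_Q n]

open Finset in
lemma aux_log (N : ℕ) : |∑ d ∈ Icc 1 N, (d : ℝ)⁻¹ * Real.log d
    - (harmonic N : ℝ) ^ 2 / 2 + Real.eulerMascheroniConstant * (harmonic N : ℝ)| ≤ 1 := by
  have hQ := aux_Q2 N
  have hH : (harmonic N : ℝ) = ∑ d ∈ Icc 1 N, (d : ℝ)⁻¹ := by
    rw [harmonic_eq_sum_Icc]; push_cast; rfl
  have hs := aux_sq N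
  set F := ∑ d ∈ Icc 1 N,
    (d : ℝ)⁻¹ * ((harmonic d : ℝ) - Real.eulerMascheroniConstant - Real.log d) with hF
  have hF0 : 0 ≤ F := sum_nonneg fun d hd =>
    mul_nonneg (by positivity) (aux_nat d (mem_Icc.1 hd).1).1
  have hF1 : F ≤ ∑ d ∈ Icc 1 N, ((d : ℝ)⁻¹) ^ 2 := by
    refine sum_le_sum fun d hd => ?_
    rw [sq]
    obtain ⟨h1, h2, h3⟩ := aux_nat d (mem_Icc.1 hd).1
    exact mul_le_mul_of_nonneg_left (by linarith) (by positivity)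
  have hF2 : F = ∑ d ∈ Icc 1 N, (d : ℝ)⁻¹ * (harmonic d : ℝ)
      - Real.eulerMascheroniConstant * (harmonic N : ℝ)
      - ∑ d ∈ Icc 1 N, (d : ℝ)⁻¹ * Real.log d := by
    rw [hF, hH, mul_sum, ← sum_sub_distrib, ← sum_sub_distrib]
    exact sum_congr rfl fun d _ => by ring
  rw [abs_le]
  constructor <;> linarith

open Finset in
/-- Hyperbola-method estimate: `Σ_{n ≤ X} τ(n)/n = (1/2) (log X)^2 + 2C log X + O(1)`,
where `C` is the Euler–Mascheroni constant. -/
theorem stmt16 :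
    ∃ B : ℝ, 0 < B ∧ ∀ X : ℝ, 1 ≤ X →
      |(∑ n ∈ Finset.Icc 1 ⌊X⌋₊, (n.divisors.card : ℝ) / n) -
          (1 / 2 * Real.log X ^ 2 + 2 * Real.eulerMascheroniConstant * Real.log X)| ≤ B := by
  refine ⟨20, by norm_num, fun X hX => ?_⟩
  rw [aux_dirichlet]
  have hlog := aux_log ⌊X⌋₊
  have he := (aux_floor X hX).trans (show 2 / X ≤ 2 by
    rw [div_le_iff₀ (by linarith)]; linarith)
  have hg0 := Real.one_half_lt_eulerMascheroniConstant
  have hg1 := Real.eulerMascheroniConstant_lt_two_thirds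
  have hH : (harmonic ⌊X⌋₊ : ℝ) = ∑ d ∈ Icc 1 ⌊X⌋₊, (d : ℝ)⁻¹ := by
    rw [harmonic_eq_sum_Icc]; push_cast; rfl
  have hE : |∑ d ∈ Icc 1 ⌊X⌋₊, (d : ℝ)⁻¹ * ((harmonic (⌊X⌋₊ / d) : ℝ)
      - Real.eulerMascheroniConstant - Real.log (X / d))| ≤ 2 := by
    refine (abs_sum_le_sum_abs _ _).trans ?_
    have : ∀ d ∈ Icc 1 ⌊X⌋₊, |(d : ℝ)⁻¹ * ((harmonic (⌊X⌋₊ / d) : ℝ)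
      - Real.eulerMascheroniConstant - Real.log (X / d))| ≤ 2 / X := by
      intro d hd
      obtain ⟨hd1, hd2⟩ := mem_Icc.1 hd
      have hp : (0 : ℝ) < d := by exact_mod_cast hd1
      have hdX : (d : ℝ) ≤ X := (Nat.le_floor_iff (by linarith)).1 hd2
      have h := aux_floor (X / d) (by rwa [one_le_div hp])
      rw [Nat.floor_div_natCast] at h
      rw [abs_mul, abs_of_pos (inv_pos.2 hp)]
      refine (mul_le_mul_of_nonneg_left h (by positivity)).trans (le_of_eq ?_)
      field_simp
    refine (sum_le_sum this).trans ?_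
    rw [sum_const, Nat.card_Icc, nsmul_eq_mul, Nat.add_sub_cancel]
    have := Nat.floor_le (show 0 ≤ X by linarith)
    rw [mul_div_assoc', div_le_iff₀ (by linarith)]
    linarith
  have hE2 : ∑ d ∈ Icc 1 ⌊X⌋₊, (d : ℝ)⁻¹ * ((harmonic (⌊X⌋₊ / d) : ℝ)
      - Real.eulerMascheroniConstant - Real.log (X / d))
      = ∑ d ∈ Icc 1 ⌊X⌋₊, (d : ℝ)⁻¹ * (harmonic (⌊X⌋₊ / d) : ℝ)
        - (Real.eulerMascheroniConstant + Real.log X) * (harmonic ⌊X⌋₊ : ℝ)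
        + ∑ d ∈ Icc 1 ⌊X⌋₊, (d : ℝ)⁻¹ * Real.log d := by
    rw [hH, mul_sum, ← sum_sub_distrib, ← sum_add_distrib]
    refine sum_congr rfl fun d hd => ?_
    have hp : (0 : ℝ) < d := by exact_mod_cast (mem_Icc.1 hd).1
    rw [Real.log_div (by linarith) hp.ne']
    ring
  rw [hE2] at hE
  generalize (∑ d ∈ Icc 1 ⌊X⌋₊, (d : ℝ)⁻¹ * (harmonic (⌊X⌋₊ / d) : ℝ)) = S at *
  generalize (∑ d ∈ Icc 1 ⌊X⌋₊, (d : ℝ)⁻¹ * Real.log d) = T at *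
  clear hE2 hH
  generalize (harmonic ⌊X⌋₊ : ℝ) = H at *
  generalize Real.log X = L at *
  generalize Real.eulerMascheroniConstant = g at *
  obtain ⟨e, rfl⟩ : ∃ e, H = L + g + e := ⟨H - L - g, by ring⟩
  rw [show L + g + e - g - L = e by ring] at he
  rw [abs_le] at *
  have e2 : e ^ 2 ≤ 4 := by nlinarith
  have g2 : g ^ 2 ≤ 1 := by nlinarith
  have ge1 : g * e ≤ 2 := by nlinarith
  have ge2 : -2 ≤ g * e := by nlinarith
  constructor <;> nlinarith [sq_nonneg e, sq_nonneg g]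
end
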